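/- arXiv:1906.09916 — 2 statements merged into one kernel-verified Lean document; each statement's English description precedes it below -/
import Mathlib

section
/- Let p be a prime, n, d ≥ 1, U an open subset of ℚ_p^d, and f : U → ℚ_p^n an analytic map. Let γ ≥ 0 and x₀ ∈ U be such that γ(f(x₀)) ≤ γ. Then for λ-almost every x in a neighbourhood of x₀ one has γ(f(x)) ≤ γ, where λ denotes the Haar measure on ℚ_p^d. -/
open MeasureTheory Metric
open scoped ENNReal NNReal

namespace PadicDioph

variable (p : ℕ) [Fact p.Prime]

noncomputable instance : MeasurableSpace ℚ_[p] := borel _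
instance : BorelSpace ℚ_[p] := ⟨rfl⟩

/-- Membership in `ℤ[1/p]`, viewed inside `ℚ`. -/
def IsZInvP (q : ℚ) : Prop := ∃ (z : ℤ) (k : ℕ), q = (z : ℚ) / (p : ℚ) ^ k

/-- Sup norm (max of archimedean absolute values) of a finite tuple of rationals. -/
noncomputable def supNormR {m : ℕ} (q : Fin m → ℚ) : ℝ := ⨆ i, |(q i : ℝ)|

/-- Sup of the `p`-adic absolute values of a finite tuple of rationals. -/
noncomputable def supNormP {m : ℕ} (q : Fin m → ℚ) : ℝ := ⨆ i, ‖((q i : ℚ_[p]))‖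

/-- Sup norm of an integer tuple together with an extra integer coordinate. -/
noncomputable def supNormZ {n : ℕ} (q0 : ℤ) (q : Fin n → ℤ) : ℝ :=
  max |(q0 : ℝ)| (⨆ i, |((q i : ℤ) : ℝ)|)

/-- The classical Diophantine exponent `w(y)` of `y ∈ ℚ_p^n`: the supremum of all `v > 0`
such that `|q₀ + q·y|_p ≤ ‖(q₀,q)‖_∞^{-v}` has infinitely many integer solutions. -/
noncomputable def wExp {n : ℕ} (y : Fin n → ℚ_[p]) : ℝ≥0∞ :=
  ⨆ (v : ℝ) (_ : 0 < v ∧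
    {qq : ℤ × (Fin n → ℤ) |
      ‖((qq.1 : ℚ_[p]) + ∑ i, (qq.2 i : ℚ_[p]) * y i)‖ ≤
        (supNormZ qq.1 qq.2) ^ (-v)}.Infinite), ENNReal.ofReal v

/-- `y` is very well approximable if `w(y) > n + 1`. -/
def IsVWA {n : ℕ} (y : Fin n → ℚ_[p]) : Prop :=
  ENNReal.ofReal ((n : ℝ) + 1) < wExp p y

/-- The defining condition of the exponent `w_p`: there are solutions
`q̃ = (q₀, q) ∈ ℤ[1/p]^{n+1}` of `|q·y + q₀|_p < (‖q‖_p ‖q̃‖_∞)^{-v} ‖q̃‖_∞^{-1}`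
with `‖q‖_p ‖q̃‖_∞` arbitrarily large. -/
def WpCond {n : ℕ} (y : Fin n → ℚ_[p]) (v : ℝ) : Prop :=
  ∀ T : ℝ, ∃ (q0 : ℚ) (q : Fin n → ℚ),
    IsZInvP p q0 ∧ (∀ i, IsZInvP p (q i)) ∧
    T < supNormP p q * supNormR (Fin.cons q0 q) ∧
    ‖(∑ i, (q i : ℚ_[p]) * y i) + (q0 : ℚ_[p])‖ <
      (supNormP p q * supNormR (Fin.cons q0 q)) ^ (-v) * (supNormR (Fin.cons q0 q))⁻¹

/-- The exponent `w_p(y)`. -/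
noncomputable def wpExp {n : ℕ} (y : Fin n → ℚ_[p]) : ℝ≥0∞ :=
  ⨆ (v : ℝ) (_ : 0 < v ∧ WpCond p y v), ENNReal.ofReal v

/-- `Π_+` of a tuple of rationals: the product of `|q_i|_∞` over the nonzero coordinates. -/
noncomputable def piPlusQ {m : ℕ} (q : Fin m → ℚ) : ℝ :=
  ∏ i, (if q i = 0 then 1 else |(q i : ℝ)|)

/-- `Π_+` of `(q₀, q)` with integer coordinates. -/
noncomputable def piPlusZ {n : ℕ} (q0 : ℤ) (q : Fin n → ℤ) : ℝ :=
  (if q0 = 0 then 1 else |(q0 : ℝ)|) * ∏ i, (if q i = 0 then 1 else |((q i : ℤ) : ℝ)|)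

/-- `y ∈ ℚ_p^n` is very well multiplicatively approximable. -/
def IsVWMA {n : ℕ} (y : Fin n → ℚ_[p]) : Prop :=
  ∃ ε : ℝ, 0 < ε ∧
    {qq : ℤ × (Fin n → ℤ) |
      ‖((qq.1 : ℚ_[p]) + ∑ i, (qq.2 i : ℚ_[p]) * y i)‖ ≤
        (piPlusZ qq.1 qq.2) ^ (-(1 + ε))}.Infinite

/-- A measure on `ℚ_p^n` is strongly extremal if almost every point is not VWMA. -/
def StronglyExtremal {n : ℕ} (μ : Measure (Fin n → ℚ_[p])) : Prop :=
  ∀ᵐ y ∂μ, ¬ IsVWMA p y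

/-- `δ(g_t u_y D^{n+1})` for the one-parameter flow: `g_t` has `p`-adic component
`diag(p^{-t},1,…,1)` and archimedean component `p^{-t/(n+1)}·Id`. -/
noncomputable def deltaOne {n : ℕ} (y : Fin n → ℚ_[p]) (t : ℕ) : ℝ :=
  sInf { c : ℝ | ∃ qt : Fin (n + 1) → ℚ, (∀ i, IsZInvP p (qt i)) ∧ qt ≠ 0 ∧
    c = ((p : ℝ) ^ (-(t : ℝ) / ((n : ℝ) + 1)) * supNormR qt) *
        max (‖(((p : ℚ_[p]) ^ t)⁻¹ * ((qt 0 : ℚ_[p]) + ∑ i : Fin n, (qt i.succ : ℚ_[p]) * y i))‖)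
            (⨆ i : Fin n, ‖((qt i.succ : ℚ_[p]))‖) }

/-- The exponent `γ(y)`. -/
noncomputable def gammaExp {n : ℕ} (y : Fin n → ℚ_[p]) : ℝ :=
  sSup {c : ℝ | 0 ≤ c ∧ ∀ N : ℕ, ∃ t : ℕ, N ≤ t ∧
    deltaOne p y t ≤ (p : ℝ) ^ (-(c * (t : ℝ)))}

/-- `δ(g_t u_y D^{n+1})` for the multiparameter flow: for `t = (t₀,…,t_n)` with
`T = Σ tᵢ`, the `p`-adic component of `g_t` is `diag(p^{-T},1,…,1)` and the archimedean
component is `diag(p^{-t₀},…,p^{-t_n})`. -/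
noncomputable def deltaMulti {n : ℕ} (y : Fin n → ℚ_[p]) (t : Fin (n + 1) → ℕ) : ℝ :=
  sInf { c : ℝ | ∃ qt : Fin (n + 1) → ℚ, (∀ i, IsZInvP p (qt i)) ∧ qt ≠ 0 ∧
    c = (⨆ i, (p : ℝ) ^ (-((t i : ℝ))) * |(qt i : ℝ)|) *
        max (‖(((p : ℚ_[p]) ^ (∑ i, t i))⁻¹ *
              ((qt 0 : ℚ_[p]) + ∑ i : Fin n, (qt i.succ : ℚ_[p]) * y i))‖)
            (⨆ i : Fin n, ‖((qt i.succ : ℚ_[p]))‖) }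

/-- The support of a measure on a metric space. -/
def measSupp {X : Type*} [MetricSpace X] [MeasurableSpace X] (μ : Measure X) : Set X :=
  {x | ∀ r : ℝ, 0 < r → 0 < μ (ball x r)}

/-- `‖f‖_{μ,B}`. -/
noncomputable def muSupNorm {X : Type*} [MetricSpace X] [MeasurableSpace X]
    (μ : Measure X) (B : Set X) (f : X → ℚ_[p]) : ℝ :=
  sSup {c : ℝ | 0 < μ {x ∈ B | c < ‖f x‖}}

/-- `f` is `(C, α)`-good on `V` with respect to `μ`. -/
def IsGoodOn {X : Type*} [MetricSpace X] [MeasurableSpace X] (μ : Measure X)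
    (C a : ℝ) (V : Set X) (f : X → ℚ_[p]) : Prop :=
  ∀ (x₀ : X) (r : ℝ), 0 < r → x₀ ∈ measSupp μ → ball x₀ r ⊆ V →
    ∀ ε : ℝ, 0 < ε →
      μ {x ∈ ball x₀ r | ‖f x‖ < ε} ≤
        ENNReal.ofReal (C * (ε / muSupNorm p μ (ball x₀ r) f) ^ a) * μ (ball x₀ r)

/-- A metric space is Besicovitch: any family of balls whose centers exhaust a bounded
set `A` admits a countable subfamily covering `A` with multiplicity at most `N`. -/
def IsBesicovitch (X : Type*) [MetricSpace X] : Prop :=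
  ∃ N : ℕ, ∀ (A : Set X), Bornology.IsBounded A →
    ∀ F : Set (X × ℝ), (∀ b ∈ F, 0 < b.2) → (∀ x ∈ A, ∃ r : ℝ, (x, r) ∈ F) →
      ∃ S ⊆ F, S.Countable ∧ (∀ x ∈ A, ∃ b ∈ S, x ∈ ball b.1 b.2) ∧
        ∀ x : X, {b ∈ S | x ∈ ball b.1 b.2}.encard ≤ N

/-- `μ` is `D`-Federer on the open set `U`. -/
def IsDFedererOn {X : Type*} [MetricSpace X] [MeasurableSpace X]
    (μ : Measure X) (D : ℝ) (U : Set X) : Prop :=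
  ∀ x ∈ measSupp μ, ∀ r : ℝ, 0 < r → ball x (3 * r) ⊆ U →
    μ (ball x (3 * r)) ≤ ENNReal.ofReal D * μ (ball x r)

/-- `μ` is Federer. -/
def IsFederer {X : Type*} [MetricSpace X] [MeasurableSpace X] (μ : Measure X) : Prop :=
  ∀ᵐ x ∂μ, ∃ U : Set X, IsOpen U ∧ x ∈ U ∧ 0 < μ U ∧ ∃ D : ℝ, 0 < D ∧ IsDFedererOn μ D U

/-- The pair `(f, μ)` is good: `μ`-a.e. point has a neighbourhood `V` and `C, α > 0`
such that every affine combination `c₀ + Σ cᵢ fᵢ` is `(C, α)`-good on `V` w.r.t. `μ`. -/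
def GoodPair {X : Type*} [MetricSpace X] [MeasurableSpace X] {n : ℕ}
    (f : X → (Fin n → ℚ_[p])) (μ : Measure X) : Prop :=
  ∀ᵐ x ∂μ, ∃ V : Set X, IsOpen V ∧ x ∈ V ∧ ∃ C a : ℝ, 0 < C ∧ 0 < a ∧
    ∀ c0 : ℚ_[p], ∀ c : Fin n → ℚ_[p],
      IsGoodOn p μ C a V (fun x => c0 + ∑ i, c i * f x i)

/-- `(f, μ)` is nonplanar in the affine subspace `L`. -/
def NonplanarIn {X : Type*} [MetricSpace X] [MeasurableSpace X] {n : ℕ}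
    (f : X → (Fin n → ℚ_[p])) (μ : Measure X)
    (L : AffineSubspace ℚ_[p] (Fin n → ℚ_[p])) : Prop :=
  ∀ B : Set X, IsOpen B → B.Nonempty → 0 < μ B →
    affineSpan ℚ_[p] (f '' (B ∩ measSupp μ)) = L

/-- `f` is nondegenerate in the affine subspace `L` at `x`: `f` takes values in `L` and the
span of the partial derivatives of `f` at `x` up to some order is the linear part of `L`. -/
def NondegenerateAt {d n : ℕ} (f : (Fin d → ℚ_[p]) → (Fin n → ℚ_[p]))
    (L : AffineSubspace ℚ_[p] (Fin n → ℚ_[p])) (x : Fin d → ℚ_[p]) : Prop :=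
  (∀ u, f u ∈ L) ∧ ∃ m : ℕ,
    Submodule.span ℚ_[p]
      {v : Fin n → ℚ_[p] | ∃ j : ℕ, j ≤ m ∧ 1 ≤ j ∧ ∃ vs : Fin j → (Fin d → ℚ_[p]),
        v = iteratedFDeriv ℚ_[p] j f x vs} = L.direction

/-- An analytic chart of the `d`-dimensional submanifold `M` of `ℚ_p^n`: an analytic map
`f` on an open set `U`, injective on `U`, immersive, a homeomorphism onto its image, whose
image is a relatively open subset of `M`. -/
def IsChart (d n : ℕ) (M : Set (Fin n → ℚ_[p]))
    (U : Set (Fin d → ℚ_[p])) (f : (Fin d → ℚ_[p]) → (Fin n → ℚ_[p])) : Prop :=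
  IsOpen U ∧ AnalyticOnNhd ℚ_[p] f U ∧ Set.InjOn f U ∧
  (∀ x ∈ U, Function.Injective (fderiv ℚ_[p] f x)) ∧
  (∀ x ∈ U, ∀ V : Set (Fin d → ℚ_[p]), IsOpen V → x ∈ V →
      ∃ W : Set (Fin n → ℚ_[p]), IsOpen W ∧ f x ∈ W ∧ W ∩ f '' U ⊆ f '' (V ∩ U)) ∧
  ∃ W : Set (Fin n → ℚ_[p]), IsOpen W ∧ M ∩ W = f '' U

/-- `M` is a `d`-dimensional analytic submanifold of `ℚ_p^n`. -/
def IsAnalyticSubmanifold (d n : ℕ) (M : Set (Fin n → ℚ_[p])) : Prop :=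
  M.Nonempty ∧ ∀ y ∈ M, ∃ (U : Set (Fin d → ℚ_[p])) (f : (Fin d → ℚ_[p]) → (Fin n → ℚ_[p])),
    IsChart p d n M U f ∧ y ∈ f '' U


section Aux

set_option linter.unusedSectionVars false
set_option linter.style.haveILetI false
noncomputable instance instMSZp : MeasurableSpace ℤ_[p] := borel _
instance instBSZp : BorelSpace ℤ_[p] := ⟨rfl⟩

/-- cylinder -/
def cyl (k : ℕ) (a : ℤ_[p]) : Set ℤ_[p] :=
  {z | PadicInt.toZModPow k z = PadicInt.toZModPow k a}

variable {p}

lemma mem_cyl_self (k : ℕ) (a : ℤ_[p]) : a ∈ cyl p k a := rfl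

lemma mem_cyl {k : ℕ} {a z : ℤ_[p]} : z ∈ cyl p k a ↔
    PadicInt.toZModPow k z = PadicInt.toZModPow k a := Iff.rfl

lemma mem_cyl_iff_norm {k : ℕ} {a z : ℤ_[p]} : z ∈ cyl p k a ↔
    ‖z - a‖ ≤ (p : ℝ) ^ (-(k : ℤ)) := by
  rw [PadicInt.norm_le_pow_iff_mem_span_pow, ← PadicInt.ker_toZModPow, RingHom.mem_ker, map_sub,
    sub_eq_zero, mem_cyl]

lemma cyl_eq_of_mem {k : ℕ} {a z : ℤ_[p]} (h : z ∈ cyl p k a) : cyl p k z = cyl p k a := by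
  ext w; rw [mem_cyl, mem_cyl, mem_cyl.1 h]

lemma cyl_anti {k l : ℕ} (h : k ≤ l) (a : ℤ_[p]) : cyl p l a ⊆ cyl p k a := by
  intro z hz
  rw [mem_cyl] at hz ⊢
  rw [← PadicInt.cast_toZModPow k l h z, hz, PadicInt.cast_toZModPow k l h a]

lemma isOpen_cyl (k : ℕ) (a : ℤ_[p]) : IsOpen (cyl p k a) := by
  have hp : (0:ℝ) < p := by exact_mod_cast (Fact.out : p.Prime).pos
  rw [Metric.isOpen_iff]
  intro z hz
  refine ⟨(p : ℝ) ^ (-(k : ℤ)), by positivity, ?_⟩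
  intro w hw
  rw [← cyl_eq_of_mem hz, mem_cyl_iff_norm]
  rw [mem_ball, dist_eq_norm] at hw
  exact hw.le

lemma meas_cyl (k : ℕ) (a : ℤ_[p]) : MeasurableSet (cyl p k a) := (isOpen_cyl k a).measurableSet

section meas
variable (ν : Measure ℤ_[p]) [IsProbabilityMeasure ν] [ν.IsAddLeftInvariant]

lemma nu_cyl_eq (k : ℕ) (a : ℤ_[p]) : ν (cyl p k a) = ν (cyl p k 0) := by
  have : cyl p k 0 = (fun z => a + z) ⁻¹' (cyl p k a) := by
    ext z; simp [mem_cyl]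
  rw [this, measure_preimage_add]

lemma nu_cyl (k : ℕ) (a : ℤ_[p]) : ν (cyl p k a) = ((p : ℝ≥0∞) ^ k)⁻¹ := by
  have : NeZero (p ^ k) := ⟨pow_ne_zero _ (Fact.out : p.Prime).ne_zero⟩
  have hsurj := ZMod.ringHom_surjective (PadicInt.toZModPow (p := p) k)
  have hU : (Set.univ : Set ℤ_[p]) = ⋃ r ∈ (Finset.univ : Finset (ZMod (p ^ k))),
      cyl p k (Function.surjInv hsurj r) := by
    ext z
    simp only [Set.mem_univ, Finset.mem_univ, Set.iUnion_true, Set.mem_iUnion, true_iff]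
    refine ⟨PadicInt.toZModPow k z, ?_⟩
    rw [mem_cyl, Function.surjInv_eq hsurj]
  have h1 : ν Set.univ = (p : ℝ≥0∞) ^ k * ν (cyl p k a) := by
    rw [hU, measure_biUnion_finset]
    · simp_rw [nu_cyl_eq ν k]
      simp [Finset.card_univ, ZMod.card]
    · intro r _ s _ hrs
      refine Set.disjoint_left.2 fun z hz hz' => hrs ?_
      rw [mem_cyl, Function.surjInv_eq hsurj] at hz hz'
      exact hz.symm.trans hz'
    · intro r _
      exact meas_cyl _ _
  rw [measure_univ] at h1
  rw [ENNReal.eq_inv_of_mul_eq_one_left (a := ν (cyl p k a)) (b := (p : ℝ≥0∞) ^ k)]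
  rw [mul_comm]; exact h1.symm

lemma nu_cyl_parent (k : ℕ) (a b : ℤ_[p]) : ν (cyl p k a) = p * ν (cyl p (k+1) b) := by
  have h0 : (p : ℝ≥0∞) ≠ 0 := by exact_mod_cast (Fact.out : p.Prime).ne_zero
  have ht : (p : ℝ≥0∞) ≠ ⊤ := ENNReal.natCast_ne_top p
  rw [nu_cyl, nu_cyl, pow_succ, ENNReal.mul_inv (Or.inr ht) (Or.inr h0), mul_comm, mul_assoc,
    ENNReal.inv_mul_cancel h0 ht, mul_one]

/-- protected points -/
def Prot {ι : Type*} (compat : ι → ι → Prop) (Ψ : ι → ℤ_[p] → ℝ) (η : ℝ) (P : Set ι)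
    (z : ℤ_[p]) : Prop :=
  ∃ F : Set ι, F ⊆ P ∧ (∀ V ∈ F, ∀ W ∈ F, compat V W) ∧ (∀ V ∈ F, η ≤ Ψ V z ∧ Ψ V z ≤ 1) ∧
    ∀ V ∈ P, (∀ W ∈ F, compat V W) → V ∈ F ∨ 1 ≤ Ψ V z

/-- constants -/
noncomputable def cc (p : ℕ) : ℕ → ℝ≥0∞
  | 0 => 0
  | s + 1 => p * (1 + cc p s)

lemma cc_ne_top (s : ℕ) : cc p s ≠ ⊤ := by
  induction s with
  | zero => simp [cc]
  | succ s ih => simp [cc, ENNReal.mul_eq_top, ih]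

theorem nondiv {ι : Type*} (dim : ι → ℕ) (compat : ι → ι → Prop)
    (hrefl : ∀ V, compat V V)
    (hsymm : ∀ V W, compat V W → compat W V) (Ψ : ι → ℤ_[p] → ℝ) (η : ℝ) (C1 : ℝ≥0∞)
    (hcd : ∀ V W, compat V W → V ≠ W → dim V ≠ dim W)
    (H1 : ∀ V z, Ψ V z < 1 → ∃ k, ∀ w ∈ cyl p k z, Ψ V w < 1)
    (H2 : ∀ V a k, (∃ z ∈ cyl p k a, 1 ≤ Ψ V z) →
      ν {z ∈ cyl p k a | Ψ V z < η} ≤ C1 * ν (cyl p k a)) (s : ℕ) :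
    ∀ (S : Finset ℕ), S.card = s → ∀ P : Set ι, (∀ V ∈ P, dim V ∈ S) → ∀ a k,
      (∀ V ∈ P, ∃ z ∈ cyl p k a, 1 ≤ Ψ V z) →
      ν {z ∈ cyl p k a | ¬ Prot compat Ψ η P z} ≤ cc p s * C1 * ν (cyl p k a) := by
  induction s with
  | zero =>
    intro S hS P hP a k _
    have : {z ∈ cyl p k a | ¬ Prot compat Ψ η P z} = ∅ := by
      ext z
      simp only [Set.mem_ofPred_eq, Set.mem_empty_iff_false, iff_false, not_and, not_not]
      intro _
      refine ⟨∅, by simp, by simp, by simp, ?_⟩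
      intro V hV
      have := hP V hV
      rw [Finset.card_eq_zero.1 hS] at this
      simp at this
    rw [this]; simp
  | succ s ih =>
    intro S hS P hP a k hB
    set U := {z ∈ cyl p k a | ¬ Prot compat Ψ η P z} with hU
    have hbad : ∀ z : ℤ_[p], z ∈ U → ∃ k', ∃ V ∈ P, ∀ w ∈ cyl p k' z, Ψ V w < 1 := by
      intro z hz
      by_contra hcon
      push Not at hcon
      apply hz.2
      refine ⟨∅, by simp, by simp, by simp, ?_⟩
      intro V hV _
      right
      by_contra hlt
      obtain ⟨k', hk'⟩ := H1 V z (not_le.1 hlt)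
      obtain ⟨w, hw, hw'⟩ := hcon k' V hV
      exact absurd (hk' w hw) (not_lt.2 hw')
    classical
    let κ : ℤ_[p] → ℕ := fun z => if h : z ∈ U then Nat.find (hbad z h) else 0
    have hκ1 : ∀ z ∈ U, ∃ V ∈ P, ∀ w ∈ cyl p (κ z) z, Ψ V w < 1 := by
      intro z hz
      simp only [κ, dif_pos hz]
      exact Nat.find_spec (hbad z hz)
    have hκ2 : ∀ z ∈ U, ∀ m < κ z, ∀ V ∈ P, ∃ w ∈ cyl p m z, 1 ≤ Ψ V w := by
      intro z hz m hm
      simp only [κ, dif_pos hz] at hm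
      have := Nat.find_min (hbad z hz) hm
      push Not at this
      exact this
    have hκk : ∀ z ∈ U, k < κ z := by
      intro z hz
      by_contra hcon
      obtain ⟨V, hV, h⟩ := hκ1 z hz
      obtain ⟨w, hw, hw'⟩ := hB V hV
      rw [← cyl_eq_of_mem hz.1] at hw
      exact absurd (h w (cyl_anti (not_lt.1 hcon) z hw)) (not_lt.2 hw')
    let 𝓓 : Set (Set ℤ_[p]) := {D | ∃ z ∈ U, D = cyl p (κ z) z}
    have hcount : 𝓓.Countable := by
      have h𝓓 : 𝓓 ⊆ Set.range (fun x : (Σ k : ℕ, ZMod (p ^ k)) =>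
          {w : ℤ_[p] | PadicInt.toZModPow x.1 w = x.2}) := by
        rintro D ⟨z, _, rfl⟩
        exact ⟨⟨κ z, PadicInt.toZModPow (κ z) z⟩, rfl⟩
      have : ∀ k, Countable (ZMod (p ^ k)) := fun k => by
        have : NeZero (p ^ k) := ⟨pow_ne_zero _ (Fact.out : p.Prime).ne_zero⟩
        infer_instance
      exact (Set.countable_range _).mono h𝓓
    have hnest : ∀ z ∈ U, ∀ w ∈ U, κ z ≤ κ w → (cyl p (κ z) z ∩ cyl p (κ w) w).Nonempty →
        cyl p (κ z) z = cyl p (κ w) w := by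
      rintro z hz w hw hle ⟨y, hy1, hy2⟩
      have h1 : y ∈ cyl p (κ z) w := cyl_anti hle w hy2
      have h2 : cyl p (κ z) z = cyl p (κ z) w := (cyl_eq_of_mem hy1).symm.trans (cyl_eq_of_mem h1)
      have h3 : κ z = κ w := by
        refine le_antisymm hle ?_
        by_contra hlt
        obtain ⟨V, hV, h⟩ := hκ1 z hz
        obtain ⟨x, hx, hx'⟩ := hκ2 w hw (κ z) (not_le.1 hlt) V hV
        rw [← h2] at hx
        exact absurd (h x hx) (not_lt.2 hx')
      rw [h2, h3]
    have hdisj : 𝓓.PairwiseDisjoint id := by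
      rintro D ⟨z, hz, rfl⟩ E ⟨w, hw, rfl⟩ hne
      rw [Function.onFun, Set.disjoint_iff_inter_eq_empty]
      by_contra hcon
      rw [← Ne, ← Set.nonempty_iff_ne_empty] at hcon
      apply hne
      rcases le_total (κ z) (κ w) with h | h
      · exact hnest z hz w hw h hcon
      · refine (hnest w hw z hz h ?_).symm
        rw [Set.inter_comm]; exact hcon
    have hmain : ∀ D ∈ 𝓓, ν (U ∩ D) ≤ cc p (s+1) * C1 * ν D := by
      rintro D ⟨z, hz, rfl⟩
      obtain ⟨m, hm⟩ : ∃ m, κ z = m + 1 := ⟨κ z - 1, by have := hκk z hz; omega⟩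
      obtain ⟨V, hV, hV1⟩ := hκ1 z hz
      have hpar := hκ2 z hz m (by omega)
      let P' : Set ι := {W ∈ P | W ≠ V ∧ compat W V}
      have hsub : U ∩ cyl p (κ z) z ⊆ {y ∈ cyl p m z | Ψ V y < η} ∪
          {y ∈ cyl p m z | ¬ Prot compat Ψ η P' y} := by
        rintro y ⟨hyU, hyD⟩
        have hym : y ∈ cyl p m z := cyl_anti (by omega) z hyD
        by_cases hη : Ψ V y < η
        · exact Or.inl ⟨hym, hη⟩
        · refine Or.inr ⟨hym, ?_⟩
          rintro ⟨F, hF1, hF2, hF3, hF4⟩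
          apply hyU.2
          refine ⟨insert V F, ?_, ?_, ?_, ?_⟩
          · rintro W (rfl | hW)
            · exact hV
            · exact (hF1 hW).1
          · rintro W (rfl | hW) W' (rfl | hW')
            · exact hrefl _
            · exact hsymm _ _ (hF1 hW').2.2
            · exact (hF1 hW).2.2
            · exact hF2 W hW W' hW'
          · rintro W (rfl | hW)
            · exact ⟨not_lt.1 hη, (hV1 y hyD).le⟩
            · exact hF3 W hW
          · intro W hW hWc
            by_cases hWV : W = V
            · exact Or.inl (Or.inl hWV)
            · rcases hF4 W ⟨hW, hWV, hWc V (Or.inl rfl)⟩ (fun X hX => hWc X (Or.inr hX)) with h | h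
              · exact Or.inl (Or.inr h)
              · exact Or.inr h
      have h1 := H2 V z m (hpar V hV)
      have h2 := ih (S.erase (dim V)) (by rw [Finset.card_erase_of_mem (hP V hV), hS]; rfl) P'
        (fun W hW => Finset.mem_erase.2 ⟨hcd W V hW.2.2 hW.2.1, hP W hW.1⟩) z m
        (fun W hW => hpar W hW.1)
      calc ν (U ∩ cyl p (κ z) z) ≤ _ := measure_mono hsub
        _ ≤ _ := measure_union_le _ _
        _ ≤ C1 * ν (cyl p m z) + cc p s * C1 * ν (cyl p m z) := add_le_add h1 h2
        _ = cc p (s+1) * C1 * ν (cyl p (κ z) z) := by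
          rw [nu_cyl_parent ν m z z, hm, cc]; ring
    calc ν U ≤ ν (⋃ D ∈ 𝓓, U ∩ D) := by
          apply measure_mono
          intro z hz
          exact Set.mem_biUnion (show cyl p (κ z) z ∈ 𝓓 from ⟨z, hz, rfl⟩) ⟨hz, mem_cyl_self _ _⟩
      _ ≤ ∑' D : 𝓓, ν (U ∩ D) := measure_biUnion_le _ hcount _
      _ ≤ ∑' D : 𝓓, cc p (s+1) * C1 * ν (D : Set ℤ_[p]) :=
          ENNReal.tsum_le_tsum fun D => hmain D D.2
      _ = cc p (s+1) * C1 * ∑' D : 𝓓, ν (D : Set ℤ_[p]) := ENNReal.tsum_mul_left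
      _ = cc p (s+1) * C1 * ν (⋃ D ∈ 𝓓, D) := by
          have := measure_biUnion (μ := ν) hcount hdisj ?_
          · simp only [id] at this
            rw [this]
          · rintro D ⟨z, _, rfl⟩; exact meas_cyl _ _
      _ ≤ cc p (s+1) * C1 * ν (cyl p k a) := by
          gcongr
          rintro y hy
          simp only [Set.mem_iUnion] at hy
          obtain ⟨D, ⟨z, hz, rfl⟩, hy⟩ := hy
          rw [← cyl_eq_of_mem hz.1]
          exact cyl_anti (hκk z hz).le z hy

end meas

lemma cyl_norm_lt {k : ℕ} {a z : ℤ_[p]} (h : z ∉ cyl p k a) :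
    (p : ℝ) ^ (-(k : ℤ)) < ‖(z : ℚ_[p]) - a‖ := by
  rw [mem_cyl_iff_norm, not_le] at h
  rwa [← PadicInt.coe_sub, ← PadicInt.norm_def]

lemma cyl_norm_le {k : ℕ} {a z w : ℤ_[p]} (h : z ∈ cyl p k a) (h' : w ∈ cyl p k a) :
    ‖(z : ℚ_[p]) - w‖ ≤ (p : ℝ) ^ (-(k : ℤ)) := by
  rw [← cyl_eq_of_mem h', mem_cyl_iff_norm] at h
  rwa [← PadicInt.coe_sub, ← PadicInt.norm_def]

theorem poly_good (ν : Measure ℤ_[p]) [IsProbabilityMeasure ν] [ν.IsAddLeftInvariant]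
    (Q : Polynomial ℚ_[p]) (K : ℕ) (hK : Q.natDegree ≤ K) (a : ℤ_[p]) (k l : ℕ) (M : ℝ)
    (hM0 : 0 < M)
    (hM : ∃ z ∈ cyl p k a, M ≤ ‖Q.eval (z : ℚ_[p])‖) :
    ν {z ∈ cyl p k a | ‖Q.eval (z : ℚ_[p])‖ < ((p : ℝ) ^ (K * l))⁻¹ * M} ≤
      (K * ((p : ℝ≥0∞) ^ l)⁻¹) * ν (cyl p k a) := by
  classical
  have hp : (0:ℝ) < p := by exact_mod_cast (Fact.out : p.Prime).pos
  have : NeZero (p ^ (k + l)) := ⟨pow_ne_zero _ (Fact.out : p.Prime).ne_zero⟩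
  set E := {z ∈ cyl p k a | ‖Q.eval (z : ℚ_[p])‖ < ((p : ℝ) ^ (K * l))⁻¹ * M} with hE
  let T : Finset (ZMod (p ^ (k + l))) :=
    Finset.univ.filter (fun r => ∃ z ∈ E, PadicInt.toZModPow (k + l) z = r)
  have hTspec : ∀ r ∈ T, ∃ z ∈ E, PadicInt.toZModPow (k + l) z = r := by
    intro r hr; simpa [T] using hr
  choose! v hvE hvr using hTspec
  have hcard : T.card ≤ K := by
    by_contra hcon
    obtain ⟨s, hsT, hs⟩ := Finset.exists_subset_card_eq (show K + 1 ≤ T.card by omega)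
    obtain ⟨z₁, hz₁, hz₁M⟩ := hM
    have hsep : ∀ r ∈ s, ∀ r' ∈ s, r ≠ r' →
        (p : ℝ) ^ (-((k + l : ℕ) : ℤ)) < ‖((v r : ℤ_[p]) : ℚ_[p]) - v r'‖ := by
      intro r hr r' hr' hne
      apply cyl_norm_lt
      rw [mem_cyl, hvr r (hsT hr), hvr r' (hsT hr')]
      exact hne
    have hinj : Set.InjOn (fun r => ((v r : ℤ_[p]) : ℚ_[p])) s := by
      intro r hr r' hr' heq
      by_contra hne
      have := hsep r hr r' hr' hne
      simp only at heq
      rw [heq, sub_self, norm_zero] at this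
      exact absurd this (not_lt.2 (by positivity))
    have hint := Lagrange.eq_interpolate (f := Q) hinj (by
      rw [hs]
      exact lt_of_le_of_lt Polynomial.degree_le_natDegree (by exact_mod_cast Nat.lt_succ_of_le hK))
    have hval : Q.eval (z₁ : ℚ_[p]) = ∑ r ∈ s, Q.eval ((v r : ℤ_[p]) : ℚ_[p]) *
        ∏ j ∈ s.erase r, ((((v r : ℤ_[p]) : ℚ_[p]) - v j)⁻¹ * ((z₁ : ℚ_[p]) - v j)) := by
      conv_lhs => rw [hint]
      simp [Lagrange.interpolate_apply, Polynomial.eval_finsetSum, Lagrange.basis,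
        Polynomial.eval_prod, Lagrange.basisDivisor]
    have hlt : ‖Q.eval (z₁ : ℚ_[p])‖ < M := by
      rw [hval]
      have hsne : s.Nonempty := Finset.card_pos.1 (by omega)
      refine lt_of_le_of_lt (IsUltrametricDist.norm_sum_le_of_forall_le_of_nonempty hsne
        (C := s.sup' hsne fun r => ‖Q.eval ((v r : ℤ_[p]) : ℚ_[p])‖ * (p : ℝ) ^ (K * l)) ?_) ?_
      · intro r hr
        refine le_trans ?_ (Finset.le_sup' (fun r => ‖Q.eval ((v r : ℤ_[p]) : ℚ_[p])‖ * (p : ℝ) ^ (K * l)) hr)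
        rw [norm_mul, norm_prod]
        gcongr
        calc ∏ j ∈ s.erase r, ‖(((v r : ℤ_[p]) : ℚ_[p]) - v j)⁻¹ * ((z₁ : ℚ_[p]) - v j)‖
            ≤ ∏ j ∈ s.erase r, (p : ℝ) ^ l := by
              apply Finset.prod_le_prod
              · intro _ _; positivity
              · intro j hj
                rw [Finset.mem_erase] at hj
                rw [norm_mul, norm_inv]
                have h1 := (hsep r hr j hj.2 hj.1.symm).le
                have h2 := cyl_norm_le hz₁ (hvE j (hsT hj.2)).1
                have h3 : (0:ℝ) < (p : ℝ) ^ (-((k + l : ℕ) : ℤ)) := by positivity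
                calc ‖((v r : ℤ_[p]) : ℚ_[p]) - v j‖⁻¹ * ‖(z₁ : ℚ_[p]) - v j‖
                    ≤ ((p : ℝ) ^ (-((k + l : ℕ) : ℤ)))⁻¹ * (p : ℝ) ^ (-(k : ℤ)) := by
                      gcongr
                  _ = (p : ℝ) ^ l := by
                      rw [← zpow_neg, ← zpow_add₀ hp.ne', ← zpow_natCast]
                      congr 1; push_cast; ring
          _ = (p : ℝ) ^ (K * l) := by
              rw [Finset.prod_const, Finset.card_erase_of_mem hr, hs, ← pow_mul]
              congr 1; rw [mul_comm]; rfl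
      · rw [Finset.sup'_lt_iff]
        intro r hr
        have := (hvE r (hsT hr)).2
        calc _ < ((p : ℝ) ^ (K * l))⁻¹ * M * (p : ℝ) ^ (K * l) := by gcongr
          _ = M := by field_simp
    exact absurd hz₁M (not_le.2 hlt)
  have hcov : E ⊆ ⋃ r ∈ T, cyl p (k + l) (v r) := by
    intro z hz
    have hT : PadicInt.toZModPow (k + l) z ∈ T := by
      simp only [T, Finset.mem_filter, Finset.mem_univ, true_and]; exact ⟨z, hz, rfl⟩
    refine Set.mem_biUnion hT ?_
    rw [mem_cyl, hvr _ hT]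
  calc ν E ≤ ν (⋃ r ∈ T, cyl p (k + l) (v r)) := measure_mono hcov
    _ ≤ ∑ r ∈ T, ν (cyl p (k + l) (v r)) := measure_biUnion_finset_le _ _
    _ = T.card * ((p : ℝ≥0∞) ^ (k + l))⁻¹ := by
        simp_rw [nu_cyl]; simp
    _ ≤ K * ((p : ℝ≥0∞) ^ (k + l))⁻¹ := by gcongr
    _ = (K * ((p : ℝ≥0∞) ^ l)⁻¹) * ν (cyl p k a) := by
        have h0 : (p : ℝ≥0∞) ≠ 0 := by exact_mod_cast (Fact.out : p.Prime).ne_zero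
        have ht : (p : ℝ≥0∞) ≠ ⊤ := ENNReal.natCast_ne_top p
        rw [nu_cyl, pow_add, ENNReal.mul_inv (Or.inl (by simp [h0])) (Or.inl (by simp))]
        ring

open Filter Topology in
lemma uniform_degree {N : ℕ} (a : Fin N → ℕ → ℚ_[p])
    (ha : ∀ i, Tendsto (a i) atTop (𝓝 0)) :
    ∃ K : ℕ, ∀ c : Fin N → ℚ_[p], (∀ k, ∑ i, c i * a i k = 0) ∨
      ∃ k ≤ K, ∑ i, c i * a i k ≠ 0 ∧ ∀ j, ‖∑ i, c i * a i j‖ ≤ ‖∑ i, c i * a i k‖ := by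
  have hp1 : (1:ℝ) < p := by exact_mod_cast (Fact.out : p.Prime).one_lt
  have hp : (0:ℝ) < p := by linarith
  have hzero : ∀ h : ZeroAtInftyContinuousMap ℕ ℚ_[p], Tendsto h atTop (𝓝 0) := by
    intro h
    have := h.zero_at_infty'
    rwa [Filter.cocompact_eq_cofinite, Nat.cofinite_eq_atTop] at this
  let A : Fin N → ZeroAtInftyContinuousMap ℕ ℚ_[p] := fun i =>
    ⟨⟨a i, continuous_of_discreteTopology⟩, by
      show Tendsto (a i) _ _
      rw [Filter.cocompact_eq_cofinite, Nat.cofinite_eq_atTop]; exact ha i⟩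
  let V : Submodule ℚ_[p] (ZeroAtInftyContinuousMap ℕ ℚ_[p]) :=
    Submodule.span ℚ_[p] (Set.range A)
  have : FiniteDimensional ℚ_[p] V := FiniteDimensional.span_of_finite _ (Set.finite_range A)
  have : ProperSpace V := FiniteDimensional.proper ℚ_[p] V
  have hle : ∀ (h : V) (k : ℕ), ‖(h : ZeroAtInftyContinuousMap ℕ ℚ_[p]) k‖ ≤ ‖h‖ := by
    intro h k
    exact BoundedContinuousFunction.norm_coe_le_norm (ZeroAtInftyContinuousMap.toBCF (h : ZeroAtInftyContinuousMap ℕ ℚ_[p])) k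
  have hcpt := isCompact_closedBall (0 : V) 1
  set e : ℝ := (p : ℝ)⁻¹ with he
  have hepos : 0 < e := by positivity
  obtain ⟨t, -, htf, htc⟩ := hcpt.finite_cover_balls hepos
  -- uniform tail
  have htail : ∃ K : ℕ, ∀ h ∈ t, ∀ j, K < j → ‖(h : ZeroAtInftyContinuousMap ℕ ℚ_[p]) j‖ < e := by
    have : ∀ h ∈ t, ∀ᶠ j in atTop, ‖(h : ZeroAtInftyContinuousMap ℕ ℚ_[p]) j‖ < e := by
      intro h _
      have := (hzero h).norm
      rw [norm_zero] at this
      exact this.eventually (gt_mem_nhds hepos)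
    have := (Filter.eventually_all_finite htf).2 this
    obtain ⟨K, hK⟩ := Filter.eventually_atTop.1 this
    exact ⟨K, fun h hh j hj => hK j hj.le h hh⟩
  obtain ⟨K, hK⟩ := htail
  refine ⟨K, fun c => ?_⟩
  by_cases hz : ∀ k, ∑ i, c i * a i k = 0
  · exact Or.inl hz
  right
  push Not at hz
  obtain ⟨k₀, hk₀⟩ := hz
  have hmem : ∑ i, c i • A i ∈ V := Submodule.sum_mem _ fun i _ =>
    Submodule.smul_mem _ _ (Submodule.subset_span ⟨i, rfl⟩)
  set h : V := ⟨_, hmem⟩ with hh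
  have hval : ∀ k, (h : ZeroAtInftyContinuousMap ℕ ℚ_[p]) k = ∑ i, c i * a i k := by
    intro k
    simp only [hh]
    have : ∀ s : Finset (Fin N), (∑ i ∈ s, c i • A i : ZeroAtInftyContinuousMap ℕ ℚ_[p]) k
        = ∑ i ∈ s, c i * a i k := by
      intro s
      classical
      induction s using Finset.induction_on with
      | empty => simp
      | insert i s hi ih =>
        rw [Finset.sum_insert hi, Finset.sum_insert hi, ZeroAtInftyContinuousMap.add_apply, ih]
        rfl
    exact this _
  -- the max is attained
  have hmax : ∃ k, ∀ j, ‖∑ i, c i * a i j‖ ≤ ‖∑ i, c i * a i k‖ := by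
    have h1 := (hzero h).norm
    rw [norm_zero] at h1
    have h2 := h1.eventually (gt_mem_nhds (norm_pos_iff.2 hk₀))
    obtain ⟨M, hM⟩ := Filter.eventually_atTop.1 h2
    obtain ⟨k, hk, hk'⟩ := Finset.exists_max_image (Finset.range (M + k₀ + 1))
      (fun j => ‖∑ i, c i * a i j‖) ⟨0, by simp⟩
    refine ⟨k, fun j => ?_⟩
    by_cases hj : j < M + k₀ + 1
    · exact hk' j (by simpa using hj)
    · have h3 := hM j (by omega)
      rw [hval] at h3
      exact h3.le.trans (hk' k₀ (Finset.mem_range.2 (by omega)))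
  obtain ⟨k, hk⟩ := hmax
  have hkne : ∑ i, c i * a i k ≠ 0 := by
    intro h0
    have := hk k₀
    rw [h0, norm_zero] at this
    exact hk₀ (norm_le_zero_iff.1 this)
  refine ⟨k, ?_, hkne, hk⟩
  by_contra hlt
  push Not at hlt
  set u := ∑ i, c i * a i k with hu
  have hball : u⁻¹ • h ∈ closedBall (0 : V) 1 := by
    refine (dist_zero_right (u⁻¹ • h)).trans_le ?_
    show ‖ZeroAtInftyContinuousMap.toBCF ((u⁻¹ • h : V) : ZeroAtInftyContinuousMap ℕ ℚ_[p])‖ ≤ _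
    rw [BoundedContinuousFunction.norm_le zero_le_one]
    intro j
    have h1 : ((u⁻¹ • h : V) : ZeroAtInftyContinuousMap ℕ ℚ_[p]) j = u⁻¹ * ∑ i, c i * a i j := by
      rw [← hval]; rfl
    show ‖((u⁻¹ • h : V) : ZeroAtInftyContinuousMap ℕ ℚ_[p]) j‖ ≤ 1
    rw [h1, norm_mul, norm_inv, inv_mul_le_iff₀ (norm_pos_iff.2 hkne), mul_one]
    exact hk j
  obtain ⟨g, hg, hgd⟩ := Set.mem_iUnion₂.1 (htc hball)
  have hgd : ‖u⁻¹ • h - g‖ < e := (dist_eq_norm (u⁻¹ • h) g).symm.trans_lt hgd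
  have h1 : ‖(g : ZeroAtInftyContinuousMap ℕ ℚ_[p]) k‖ < e := hK g hg k hlt
  have h2 := hle (u⁻¹ • h - g) k
  have h3 : ((u⁻¹ • h - g : V) : ZeroAtInftyContinuousMap ℕ ℚ_[p]) k = 1 - (g : ZeroAtInftyContinuousMap ℕ ℚ_[p]) k := by
    simp only [Submodule.coe_sub, Submodule.coe_smul, ZeroAtInftyContinuousMap.sub_apply,
      ZeroAtInftyContinuousMap.smul_apply, hval, smul_eq_mul]
    rw [inv_mul_cancel₀ hkne]
  rw [h3] at h2
  have he1 : e < 1 := inv_lt_one_of_one_lt₀ hp1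
  have h4 : (1:ℝ) ≤ max ‖1 - (g : ZeroAtInftyContinuousMap ℕ ℚ_[p]) k‖ ‖(g : ZeroAtInftyContinuousMap ℕ ℚ_[p]) k‖ := by
    have := IsUltrametricDist.norm_add_le_max (1 - (g : ZeroAtInftyContinuousMap ℕ ℚ_[p]) k) ((g : ZeroAtInftyContinuousMap ℕ ℚ_[p]) k)
    simpa using this
  rcases le_max_iff.1 h4 with h | h <;> linarith

/-- evaluation at `p z` -/
lemma summable_eval (g : PowerSeries ℤ_[p]) (z : ℤ_[p]) :
    Summable (fun k => ‖PowerSeries.coeff k g * ((p : ℤ_[p]) * z) ^ k‖) := by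
  have hp1 : (1:ℝ) < p := by exact_mod_cast (Fact.out : p.Prime).one_lt
  refine Summable.of_nonneg_of_le (fun _ => norm_nonneg _) (fun k => ?_)
    (summable_geometric_of_lt_one (r := (p:ℝ)⁻¹) (by positivity) (inv_lt_one_of_one_lt₀ hp1))
  rw [norm_mul, norm_pow, norm_mul, PadicInt.norm_p]
  calc _ ≤ 1 * ((p:ℝ)⁻¹ * 1) ^ k := by
        gcongr
        · exact PadicInt.norm_le_one _
        · exact PadicInt.norm_le_one _
    _ = _ := by simp

/-- evaluation at `p z` -/
noncomputable def pev (g : PowerSeries ℤ_[p]) (z : ℤ_[p]) : ℤ_[p] :=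
  ∑' k, PowerSeries.coeff k g * ((p : ℤ_[p]) * z) ^ k

lemma pev_mul (g h : PowerSeries ℤ_[p]) (z : ℤ_[p]) : pev (g * h) z = pev g z * pev h z := by
  unfold pev
  rw [tsum_mul_tsum_eq_tsum_sum_antidiagonal_of_summable_norm (summable_eval g z) (summable_eval h z)]
  congr 1
  ext1 k
  rw [PowerSeries.coeff_mul, Finset.sum_mul]
  refine Finset.sum_congr rfl fun x hx => ?_
  rw [← Finset.HasAntidiagonal.mem_antidiagonal.1 hx, pow_add]; ring

lemma pev_poly (f : Polynomial ℤ_[p]) (z : ℤ_[p]) :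
    pev (f : PowerSeries ℤ_[p]) z = f.eval ((p : ℤ_[p]) * z) := by
  unfold pev
  rw [Polynomial.eval_eq_sum_range, tsum_eq_sum (s := Finset.range (f.natDegree + 1))]
  · simp
  · intro k hk
    rw [Polynomial.coeff_coe, Polynomial.coeff_eq_zero_of_natDegree_lt, zero_mul]
    simpa using hk

lemma pev_unit (h : PowerSeries ℤ_[p]) (hu : IsUnit h) (z : ℤ_[p]) : ‖pev h z‖ = 1 := by
  obtain ⟨u, rfl⟩ := hu
  have h1 : pev (u : PowerSeries ℤ_[p]) z * pev (↑(u⁻¹) : PowerSeries ℤ_[p]) z = 1 := by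
    rw [← pev_mul, Units.mul_inv]
    have := pev_poly (p := p) 1 z
    simpa using this
  exact PadicInt.isUnit_iff.1 (IsUnit.of_mul_eq_one _ h1)

theorem analytic_poly {N : ℕ} (a : Fin N → ℕ → ℚ_[p])
    (ha : ∀ i, Filter.Tendsto (a i) Filter.atTop (nhds 0)) :
    ∃ K : ℕ, ∀ c : Fin N → ℚ_[p], ∃ Q : Polynomial ℚ_[p], Q.natDegree ≤ K ∧
      ∀ z : ℤ_[p], ‖∑ i, c i * ∑' k, a i k * ((p : ℚ_[p]) * z) ^ k‖ = ‖Q.eval (z : ℚ_[p])‖ := by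
  have hp1 : (1:ℝ) < p := by exact_mod_cast (Fact.out : p.Prime).one_lt
  obtain ⟨K, hK⟩ := uniform_degree a ha
  refine ⟨K, fun c => ?_⟩
  have hsum : ∀ i (z : ℤ_[p]), Summable (fun k => a i k * ((p : ℚ_[p]) * z) ^ k) := by
    intro i z
    apply NonarchimedeanAddGroup.summable_of_tendsto_cofinite_zero
    rw [Nat.cofinite_eq_atTop]
    have h1 := (ha i).norm
    rw [norm_zero] at h1
    refine squeeze_zero_norm (fun k => ?_) h1
    rw [norm_mul, norm_pow, norm_mul]
    refine mul_le_of_le_one_right (norm_nonneg _) (pow_le_one₀ (by positivity) ?_)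
    refine mul_le_one₀ ?_ (norm_nonneg _) (PadicInt.norm_le_one z)
    rw [Padic.norm_p]; exact (inv_lt_one_of_one_lt₀ hp1).le
  have hval : ∀ z : ℤ_[p], ∑ i, c i * ∑' k, a i k * ((p : ℚ_[p]) * z) ^ k =
      ∑' k, (∑ i, c i * a i k) * ((p : ℚ_[p]) * z) ^ k := by
    intro z
    simp_rw [← tsum_mul_left]
    rw [← Summable.tsum_finsetSum (fun i _ => (hsum i z).mul_left (c i))]
    congr 1; ext1 k
    rw [Finset.sum_mul]
    exact Finset.sum_congr rfl fun i _ => by ring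
  simp_rw [hval]
  rcases hK c with h0 | ⟨k₀, hk₀K, hne, hmax⟩
  · exact ⟨0, by simp, fun z => by simp [h0]⟩
  set u := ∑ i, c i * a i k₀ with hu
  let b : ℕ → ℤ_[p] := fun k => ⟨u⁻¹ * ∑ i, c i * a i k, by
    rw [norm_mul, norm_inv, inv_mul_le_iff₀ (norm_pos_iff.2 hne), mul_one]; exact hmax k⟩
  have hb : ∀ k, ∑ i, c i * a i k = u * (b k : ℚ_[p]) := by
    intro k
    show _ = u * (u⁻¹ * _)
    rw [mul_inv_cancel_left₀ hne]
  have hbk : b k₀ = 1 := by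
    apply Subtype.ext
    show u⁻¹ * u = 1
    exact inv_mul_cancel₀ hne
  let g : PowerSeries ℤ_[p] := PowerSeries.mk b
  have hcoef : PowerSeries.coeff k₀ (g.map (IsLocalRing.residue ℤ_[p])) ≠ 0 := by
    simp [g, hbk]
  have hg0 : g.map (IsLocalRing.residue ℤ_[p]) ≠ 0 := by
    intro h; rw [h] at hcoef; simp at hcoef
  obtain ⟨f, h, H⟩ := PowerSeries.exists_isWeierstrassFactorization hg0
  have hdeg : f.natDegree ≤ K := by
    rw [H.natDegree_eq_toNat_order_map]
    have := PowerSeries.order_le k₀ hcoef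
    exact (ENat.toNat_le_of_le_natCast this).trans hk₀K
  refine ⟨Polynomial.C u * (f.map PadicInt.Coe.ringHom).comp (Polynomial.C (p : ℚ_[p]) * Polynomial.X), ?_, ?_⟩
  · refine (Polynomial.natDegree_C_mul_le _ _).trans (Polynomial.natDegree_comp_le.trans ?_)
    calc _ ≤ K * 1 := Nat.mul_le_mul ((Polynomial.natDegree_map_le).trans hdeg)
            ((Polynomial.natDegree_C_mul_le _ _).trans Polynomial.natDegree_X_le)
      _ = K := mul_one K
  · intro z
    simp_rw [hb, mul_assoc]
    rw [tsum_mul_left, norm_mul, Polynomial.eval_mul, norm_mul, Polynomial.eval_C]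
    congr 1
    have h1 : ∑' k, (b k : ℚ_[p]) * ((p : ℚ_[p]) * z) ^ k = ((pev g z : ℤ_[p]) : ℚ_[p]) := by
      unfold pev
      have hs := (summable_eval g z).of_norm
      have hs2 := hs.hasSum.map (PadicInt.Coe.ringHom (p := p)) continuous_subtype_val
      refine Eq.trans ?_ hs2.tsum_eq
      congr 1; ext1 k
      simp only [g, PowerSeries.coeff_mk, Function.comp, map_mul, map_pow]
      simp; rfl
    have h2 : Polynomial.eval (z : ℚ_[p]) ((f.map PadicInt.Coe.ringHom).comp (Polynomial.C (p : ℚ_[p]) * Polynomial.X))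
        = ((f.eval ((p : ℤ_[p]) * z) : ℤ_[p]) : ℚ_[p]) := by
      rw [Polynomial.eval_comp]
      have : Polynomial.eval (z : ℚ_[p]) (Polynomial.C (p : ℚ_[p]) * Polynomial.X) =
        PadicInt.Coe.ringHom ((p : ℤ_[p]) * z) := by
          simp; exact Or.inl rfl
      rw [this, Polynomial.eval_map_apply]
      rfl
    rw [h1, h2, H.eq_mul, pev_mul, pev_poly, PadicInt.coe_mul, norm_mul, ← PadicInt.norm_def (z := pev h z),
      pev_unit h H.isUnit, mul_one]

/-- maximal minor norm -/
noncomputable def mm {j N : ℕ} (b : Matrix (Fin j) (Fin N) ℤ) : ℝ :=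
  ‖fun I : Fin j → Fin N => (b.submatrix id I).det‖

lemma mm_nonneg {j N : ℕ} (b : Matrix (Fin j) (Fin N) ℤ) : 0 ≤ mm b := norm_nonneg _

lemma mm_mul {j N : ℕ} (T : Matrix (Fin j) (Fin j) ℤ) (b : Matrix (Fin j) (Fin N) ℤ) :
    mm (T * b) = |(T.det : ℝ)| * mm b := by
  unfold mm
  have : (fun I : Fin j → Fin N => ((T * b).submatrix id I).det) =
      T.det • fun I : Fin j → Fin N => (b.submatrix id I).det := by
    funext I
    have : (T * b).submatrix id I = T * b.submatrix id I := by
      ext a c; simp [Matrix.mul_apply]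
    rw [this, Matrix.det_mul]; rfl
  rw [this, norm_smul, Int.norm_eq_abs]

lemma mm_cons {j N : ℕ} (b : Matrix (Fin j) (Fin N) ℤ) (v : Fin N → ℤ) :
    mm (Matrix.of (Fin.cons v b : Fin (j+1) → Fin N → ℤ)) ≤ (j + 1) * (mm b * ‖v‖) := by
  unfold mm
  rw [pi_norm_le_iff_of_nonneg (by positivity)]
  intro I
  rw [Matrix.det_succ_row_zero]
  refine (norm_sum_le _ _).trans ?_
  have : ∀ i ∈ (Finset.univ : Finset (Fin (j+1))), ‖(-1) ^ (i : ℕ) *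
      ((Matrix.of (Fin.cons v b : Fin (j+1) → Fin N → ℤ)).submatrix id I) 0 i *
      (((Matrix.of (Fin.cons v b : Fin (j+1) → Fin N → ℤ)).submatrix id I).submatrix
        Fin.succ i.succAbove).det‖ ≤ mm b * ‖v‖ := by
    intro i _
    have h1 : (((Matrix.of (Fin.cons v b : Fin (j+1) → Fin N → ℤ)).submatrix id I).submatrix
        Fin.succ i.succAbove) = b.submatrix id (I ∘ i.succAbove) := by
      ext a c; rfl
    rw [h1, norm_mul, norm_mul, norm_pow, norm_neg, norm_one, one_pow, one_mul, mul_comm]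
    have h2 : ‖(b.submatrix id (I ∘ i.succAbove)).det‖ ≤ mm b :=
      norm_le_pi_norm (fun I : Fin j → Fin N => (b.submatrix id I).det) _
    have h3 : ‖((Matrix.of (Fin.cons v b : Fin (j+1) → Fin N → ℤ)).submatrix id I) 0 i‖ ≤ ‖v‖ := by
      exact norm_le_pi_norm v (I i)
    exact mul_le_mul h2 h3 (norm_nonneg _) (mm_nonneg b)
  refine (Finset.sum_le_sum this).trans ?_
  simp [mm]

lemma phi_mul {j N : ℕ} (T : Matrix (Fin j) (Fin j) ℤ) (b : Matrix (Fin j) (Fin N) ℤ)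
    (φ : (Fin N → ℤ) →+ ℚ_[p]) (i : Fin j) :
    φ ((T * b) i) = ∑ k, (T i k : ℚ_[p]) * φ (b k) := by
  have : (T * b) i = ∑ k, T i k • b k := by
    ext c; simp [Matrix.mul_apply]
  rw [this, map_sum]
  refine Finset.sum_congr rfl fun k _ => ?_
  rw [map_zsmul, zsmul_eq_mul]

lemma norm_eq_inv_pow {x : ℚ_[p]} (hx : x ≠ 0) (h1 : ‖x‖ ≤ 1) : ∃ m : ℕ, ‖x‖ = ((p:ℝ) ^ m)⁻¹ := by
  have h := Padic.norm_eq_zpow_neg_valuation hx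
  have h0 : 0 ≤ x.valuation := by
    rw [h] at h1
    have hp1 : (1:ℝ) < p := by exact_mod_cast (Fact.out : p.Prime).one_lt
    have := (zpow_le_one_iff_right₀ hp1).1 h1
    omega
  obtain ⟨m, hm⟩ := Int.eq_ofNat_of_zero_le h0
  exact ⟨m, by rw [h, hm, zpow_neg]; simp⟩

lemma one_le_abs_mul_norm {D : ℤ} (hD : D ≠ 0) : 1 ≤ |(D : ℝ)| * ‖(D : ℚ_[p])‖ := by
  have hp : (0:ℝ) < p := by exact_mod_cast (Fact.out : p.Prime).pos
  obtain ⟨m, hm⟩ := norm_eq_inv_pow (p := p) (x := (D : ℚ_[p])) (by exact_mod_cast hD)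
    (Padic.norm_int_le_one _)
  have h1 : ((p ^ m : ℕ) : ℤ) ∣ D := by
    push_cast
    rw [← Padic.norm_int_le_pow_iff_dvd, hm, zpow_neg]; simp
  have h2 := Int.le_of_dvd (abs_pos.2 hD) ((dvd_abs _ _).2 h1)
  have h3 : (p:ℝ)^m ≤ |(D:ℝ)| := by exact_mod_cast h2
  rw [hm, ← div_eq_mul_inv, le_div_iff₀ (by positivity), one_mul]
  exact h3

lemma exists_sublattice {j N : ℕ} (b : Matrix (Fin j) (Fin N) ℤ)
    (φ : (Fin N → ℤ) →+ ℚ_[p]) (t : ℕ) :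
    ∃ T : Matrix (Fin j) (Fin j) ℤ,
      |(T.det : ℝ)| = max 1 ((p:ℝ) ^ t * ‖fun i => φ (b i)‖) ∧
      ∀ i, ‖φ ((T * b) i)‖ ≤ ((p:ℝ) ^ t)⁻¹ := by
  have hp1 : (1:ℝ) < p := by exact_mod_cast (Fact.out : p.Prime).one_lt
  have hp : (0:ℝ) < p := by linarith
  by_cases hle : (p:ℝ) ^ t * ‖fun i => φ (b i)‖ ≤ 1
  · refine ⟨1, by simp [max_eq_left hle], fun i => ?_⟩
    rw [Matrix.one_mul]
    have h1 := norm_le_pi_norm (fun i => φ (b i)) i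
    have : ‖fun i => φ (b i)‖ ≤ ((p:ℝ)^t)⁻¹ := by
      rwa [← one_div, le_div_iff₀' (by positivity)]
    exact h1.trans this
  push Not at hle
  have hne : Nonempty (Fin j) := by
    by_contra h
    have := not_nonempty_iff.1 h
    have h0 : (fun i => φ (b i)) = 0 := Subsingleton.elim _ _
    rw [h0, norm_zero, mul_zero] at hle
    linarith
  obtain ⟨i₀, hi₀⟩ := Finite.exists_max (fun i => ‖φ (b i)‖)
  have hn : ‖fun i => φ (b i)‖ = ‖φ (b i₀)‖ :=
    le_antisymm ((pi_norm_le_iff_of_nonneg (norm_nonneg _)).2 hi₀)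
      (norm_le_pi_norm (fun i => φ (b i)) i₀)
  rw [hn] at hle ⊢
  set x := φ (b i₀) with hx
  have hx0 : x ≠ 0 := by
    intro h; rw [h] at hle; simp at hle; linarith
  obtain ⟨e, he⟩ := norm_eq_inv_pow (p := p) (x := (p:ℚ_[p])^t * x⁻¹)
    (by
      have : (p:ℚ_[p]) ≠ 0 := by exact_mod_cast (Fact.out : p.Prime).ne_zero
      positivity) (by
      rw [norm_mul, norm_pow, norm_inv, Padic.norm_p, inv_pow, ← mul_inv]
      exact inv_le_one_of_one_le₀ hle.le)
  have he' : (p:ℝ)^t * ‖x‖ = (p:ℝ)^e := by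
    rw [norm_mul, norm_pow, norm_inv, Padic.norm_p, inv_pow, ← mul_inv] at he
    exact inv_injective he
  have hc : ∀ i, ∃ c : ℤ, ‖φ (b i) - c * x‖ ≤ ((p:ℝ)^t)⁻¹ := by
    intro i
    let r : ℤ_[p] := ⟨φ (b i) / x, by
      rw [norm_div]; exact div_le_one_of_le₀ (hi₀ i) (norm_nonneg _)⟩
    refine ⟨(r.appr e : ℤ), ?_⟩
    have h1 := ((r - r.appr e).norm_le_pow_iff_mem_span_pow e).mpr (r.appr_spec e)
    have h2 : φ (b i) - ((r.appr e : ℤ) : ℚ_[p]) * x = ((r - r.appr e : ℤ_[p]) : ℚ_[p]) * x := by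
      rw [PadicInt.coe_sub]
      have : (r : ℚ_[p]) = φ (b i) / x := rfl
      rw [this]
      field_simp
      push_cast
      ring
    rw [h2, norm_mul, ← PadicInt.norm_def]
    calc _ ≤ (p:ℝ) ^ (-(e:ℤ)) * ‖x‖ := by gcongr
      _ = ((p:ℝ)^t)⁻¹ := by
        rw [zpow_neg, zpow_natCast, ← he']; field_simp
  choose c hc using hc
  let w : Fin j → ℤ := fun i => if i = i₀ then (p:ℤ)^e else - c i
  refine ⟨(1 : Matrix (Fin j) (Fin j) ℤ).updateCol i₀ w, ?_, ?_⟩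
  · rw [← Matrix.cramer_apply, Matrix.cramer_one]
    simp only [Module.End.one_apply, w, if_true]
    rw [max_eq_right hle.le, he']; simp
  · intro i
    rw [phi_mul]
    by_cases hi : i = i₀
    · subst hi
      rw [Finset.sum_eq_single i]
      · simp only [Matrix.updateCol_self, w, if_true]
        rw [norm_mul]
        push_cast
        rw [norm_pow, Padic.norm_p, inv_pow, ← he']
        field_simp
        rw [hx]
      · intro k _ hk
        rw [Matrix.updateCol_ne hk, Matrix.one_apply_ne hk.symm]; simp
      · simp
    · have : ∑ k, (((1 : Matrix (Fin j) (Fin j) ℤ).updateCol i₀ w i k : ℤ) : ℚ_[p]) * φ (b k)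
          = φ (b i) - c i * x := by
        rw [Finset.sum_eq_add i i₀ hi]
        · rw [Matrix.updateCol_ne hi, Matrix.one_apply_eq, Matrix.updateCol_self]
          simp only [w, hi, if_false]
          push_cast; ring
        · intro k _ hk
          rw [Matrix.updateCol_ne hk.2, Matrix.one_apply_ne hk.1.symm]; simp
        · simp
        · simp
      rw [this]; exact hc i

lemma le_det {j N : ℕ} (w : Matrix (Fin j) (Fin N) ℤ) (φ : (Fin N → ℤ) →+ ℚ_[p]) (t : ℕ)
    (T : Matrix (Fin j) (Fin j) ℤ) (hT : T.det ≠ 0)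
    (h : ∀ i, ‖φ ((T * w) i)‖ ≤ ((p:ℝ) ^ t)⁻¹) :
    max 1 ((p:ℝ) ^ t * ‖fun i => φ (w i)‖) ≤ |(T.det : ℝ)| := by
  have hp : (0:ℝ) < p := by exact_mod_cast (Fact.out : p.Prime).pos
  have h1 : (1:ℝ) ≤ |(T.det : ℝ)| := by
    exact_mod_cast Int.one_le_abs hT
  have h2 : 1 ≤ |(T.det : ℝ)| * ‖(T.det : ℚ_[p])‖ := one_le_abs_mul_norm hT
  refine max_le h1 ?_
  rw [← le_div_iff₀' (by positivity), pi_norm_le_iff_of_nonneg (by positivity)]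
  intro i
  have h3 : (T.det : ℚ_[p]) * φ (w i) = ∑ k, (T.adjugate i k : ℚ_[p]) * φ ((T * w) k) := by
    have := phi_mul T.adjugate (T * w) φ i
    rw [← this, ← Matrix.mul_assoc, Matrix.adjugate_mul, Matrix.smul_mul, Matrix.one_mul]
    have : (T.det • w) i = T.det • w i := rfl
    rw [this, map_zsmul]; simp
  have h4 : ‖(T.det : ℚ_[p])‖ * ‖φ (w i)‖ ≤ ((p:ℝ)^t)⁻¹ := by
    rw [← norm_mul, h3]
    refine IsUltrametricDist.norm_sum_le_of_forall_le_of_nonneg (by positivity) fun k _ => ?_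
    rw [norm_mul]
    exact (mul_le_of_le_one_left (norm_nonneg _) (Padic.norm_int_le_one _)).trans (h k)
  rw [le_div_iff₀' (by positivity)]
  calc (p:ℝ)^t * ‖φ (w i)‖ ≤ (p:ℝ)^t * ‖φ (w i)‖ * (|(T.det : ℝ)| * ‖(T.det : ℚ_[p])‖) :=
        le_mul_of_one_le_right (by positivity) h2
    _ = |(T.det : ℝ)| * ((p:ℝ)^t * (‖(T.det : ℚ_[p])‖ * ‖φ (w i)‖)) := by ring
    _ ≤ |(T.det : ℝ)| * ((p:ℝ)^t * ((p:ℝ)^t)⁻¹) := by gcongr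
    _ = _ := by rw [mul_inv_cancel₀ (by positivity), mul_one]

lemma exists_minor {j N : ℕ} (b : Matrix (Fin j) (Fin N) ℤ)
    (hb : LinearIndependent ℚ (fun i => fun k => ((b i k : ℤ) : ℚ))) :
    ∃ I : Fin j → Fin N, (b.submatrix id I).det ≠ 0 := by
  set B : Matrix (Fin j) (Fin N) ℚ := b.map (Int.cast : ℤ → ℚ) with hB
  have hr : B.rank = j := by
    have : LinearIndependent ℚ B.row := hb
    simpa using this.rank_matrix
  rw [Matrix.rank_eq_finrank_span_cols] at hr
  obtain ⟨f, hf, -, hli⟩ := Submodule.exists_fun_fin_finrank_span_eq ℚ (Set.range B.col)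
  choose I hI using hf
  refine ⟨fun i => I (Fin.cast hr.symm i), fun h0 => ?_⟩
  have hli' : LinearIndependent ℚ (fun i : Fin j => B.col (I (Fin.cast hr.symm i))) := by
    simp_rw [hI]
    exact hli.comp _ (Fin.cast_injective _)
  have h1 := Matrix.linearIndependent_cols_iff_isUnit (A := B.submatrix id (fun i : Fin j => I (Fin.cast hr.symm i)))
  have h2 := (Matrix.isUnit_iff_isUnit_det _).1 (h1.1 hli')
  have h3 : (B.submatrix id (fun i : Fin j => I (Fin.cast hr.symm i))).det = 
      (((b.submatrix id (fun i => I (Fin.cast hr.symm i))).det : ℤ) : ℚ) := by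
    rw [Int.cast_det]; rfl
  rw [h3, h0] at h2
  simp at h2

lemma mm_ne_zero {j N : ℕ} (b : Matrix (Fin j) (Fin N) ℤ)
    (hb : LinearIndependent ℚ (fun i => fun k => ((b i k : ℤ) : ℚ))) : mm b ≠ 0 := by
  obtain ⟨I, hI⟩ := exists_minor b hb
  intro h
  exact hI (congrFun (norm_eq_zero.1 h) I)

lemma minkowski {j N : ℕ} (hj : j ≠ 0) (b : Matrix (Fin j) (Fin N) ℤ)
    (hb : mm b ≠ 0) (ρ : ℝ) (hρ : 0 < ρ)
    (hm : mm b ≤ ρ ^ j) : ∃ k : Fin j → ℤ, (Matrix.vecMul k b ≠ 0) ∧ ‖Matrix.vecMul k b‖ ≤ j * ρ := by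
  classical
  obtain ⟨I₀, hI₀⟩ : ∃ I : Fin j → Fin N, (b.submatrix id I).det ≠ 0 := by
    by_contra h
    push Not at h
    exact hb (norm_eq_zero.2 (funext h))
  have : Nonempty (Fin j → Fin N) := ⟨I₀⟩
  obtain ⟨I, hI⟩ := Finite.exists_max (fun I : Fin j → Fin N => ‖(b.submatrix id I).det‖)
  have hdet : (b.submatrix id I).det ≠ 0 := by
    rw [← norm_pos_iff]
    exact (norm_pos_iff.2 hI₀).trans_le (hI I₀)
  have hle : ‖(b.submatrix id I).det‖ ≤ ρ ^ j :=
    (norm_le_pi_norm (fun I : Fin j → Fin N => (b.submatrix id I).det) I).trans hm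
  set A : Matrix (Fin j) (Fin j) ℝ := (b.submatrix id I).map (Int.cast : ℤ → ℝ) with hA
  have hAdet : A.det = (((b.submatrix id I).det : ℤ) : ℝ) := by rw [Int.cast_det]
  have hA0 : A.det ≠ 0 := by rw [hAdet]; exact_mod_cast hdet
  have hli : LinearIndependent ℝ A.row :=
    Matrix.linearIndependent_rows_iff_isUnit.2 ((Matrix.isUnit_iff_isUnit_det _).2 hA0.isUnit)
  have : Nonempty (Fin j) := ⟨⟨0, Nat.pos_of_ne_zero hj⟩⟩
  let β := basisOfPiSpaceOfLinearIndependent hli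
  have hβ : ∀ i, β i = A i := by
    intro i
    simp [β]; rfl
  have hcard : Module.finrank ℝ (Fin j → ℝ) = j := by simp
  have : Countable (Submodule.span ℤ (Set.range β)).toAddSubgroup := 
    inferInstanceAs (Countable (Submodule.span ℤ (Set.range β)))
  have : DiscreteTopology (Submodule.span ℤ (Set.range β)).toAddSubgroup := 
    inferInstanceAs (DiscreteTopology (Submodule.span ℤ (Set.range β)))
  obtain ⟨x, hx0, hx⟩ := exists_ne_zero_mem_lattice_of_measure_mul_two_pow_le_measure
    (s := closedBall (0 : Fin j → ℝ) ρ)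
    (ZSpan.isAddFundamentalDomain' β volume) (by intro x hx; simpa using hx) (convex_closedBall _ _)
    (isCompact_closedBall _ _) (by
      rw [ZSpan.volume_fundamentalDomain, Real.volume_pi_closedBall _ hρ.le, hcard]
      have : Matrix.of β = A := by ext i k; exact congrFun (hβ i) k
      rw [this, hAdet, Fintype.card_fin, mul_pow, ENNReal.ofReal_mul (by positivity), mul_comm]
      gcongr
      · rw [ENNReal.ofReal_pow (by positivity)]; simp
      · rwa [Int.norm_eq_abs] at hle)
  have hxm : (x : Fin j → ℝ) ∈ Submodule.span ℤ (Set.range β) := x.2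
  obtain ⟨k, hk⟩ := (Submodule.mem_span_range_iff_exists_fun ℤ).1 hxm
  have hxI : ∀ c, ((Matrix.vecMul k b (I c) : ℤ) : ℝ) = (x : Fin j → ℝ) c := by
    intro c
    rw [← hk]
    simp [hβ, Matrix.vecMul, dotProduct, hA]
  refine ⟨k, fun h0 => hx0 ?_, ?_⟩
  · apply Subtype.ext
    funext c
    rw [← hxI, h0]; simp
  rw [pi_norm_le_iff_of_nonneg (by positivity)]
  intro r
  have hxn : ∀ c, |(x : Fin j → ℝ) c| ≤ ρ := by
    intro c
    have := norm_le_pi_norm (x : Fin j → ℝ) c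
    rw [mem_closedBall_zero_iff] at hx
    exact this.trans hx
  -- Cramer
  set D := (b.submatrix id I).det with hD
  let s : Fin j → ℤ := Matrix.cramer (b.submatrix id I) (fun i => b i r)
  have hs : ∀ c, |(s c : ℝ)| ≤ |(D:ℝ)| := by
    intro c
    have h1 : s c = (b.submatrix id (Function.update I c r)).det := by
      simp only [s, Matrix.cramer_apply]
      congr 1
      ext a c'
      by_cases hc : c' = c
      · subst hc; simp
      · simp [hc]
    have := hI (Function.update I c r)
    rw [← h1, Int.norm_eq_abs, Int.norm_eq_abs] at this
    exact this
  have h2 : D * (Matrix.vecMul k b r) = ∑ c, s c * Matrix.vecMul k b (I c) := by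
    have h3 := Matrix.mulVec_cramer (b.submatrix id I) (fun i => b i r)
    have h4 : k ⬝ᵥ ((b.submatrix id I).mulVec s) = k ⬝ᵥ (D • fun i => b i r) := by rw [← h3]
    rw [dotProduct_smul, Matrix.dotProduct_mulVec, dotProduct_comm] at h4
    rw [smul_eq_mul] at h4
    exact h4.symm
  have h5 : |(D:ℝ)| * |((Matrix.vecMul k b r : ℤ) : ℝ)| ≤ |(D:ℝ)| * (j * ρ) := by
    rw [← abs_mul]
    have : ((D:ℝ) * ((Matrix.vecMul k b r : ℤ) : ℝ)) = ∑ c, (s c : ℝ) * (x : Fin j → ℝ) c := by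
      simp_rw [← hxI]
      exact_mod_cast h2
    rw [this]
    refine (Finset.abs_sum_le_sum_abs _ _).trans ?_
    calc _ ≤ ∑ c : Fin j, |(D:ℝ)| * ρ := by
          refine Finset.sum_le_sum fun c _ => ?_
          rw [abs_mul]
          exact mul_le_mul (hs c) (hxn c) (abs_nonneg _) (abs_nonneg _)
      _ = _ := by simp; ring
  rw [Int.norm_eq_abs]
  exact le_of_mul_le_mul_left h5 (by positivity)

/-- cast -/
def castv {N : ℕ} (u : Fin N → ℤ) : Fin N → ℚ := fun k => (u k : ℚ)

/-- cast as linear map -/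
def castl (N : ℕ) : (Fin N → ℤ) →ₗ[ℤ] (Fin N → ℚ) where
  toFun := castv
  map_add' u v := by ext; simp [castv]
  map_smul' c v := by ext; simp [castv]

lemma castl_inj (N : ℕ) : Function.Injective (castl N) := by
  intro u v h
  ext k
  have := congrFun h k
  simpa [castl, castv] using this

lemma vecMul_eq_sum {j N : ℕ} (k : Fin j → ℤ) (b : Matrix (Fin j) (Fin N) ℤ) :
    Matrix.vecMul k b = ∑ i, k i • b i := by
  ext c; simp [Matrix.vecMul, dotProduct]

lemma exists_intbasis {N : ℕ} (V : Submodule ℚ (Fin N → ℚ)) :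
    ∃ b : Matrix (Fin (Module.finrank ℚ V)) (Fin N) ℤ,
      LinearIndependent ℚ (fun i => castv (b i)) ∧ (∀ i, castv (b i) ∈ V) ∧
      ∀ u, castv u ∈ V → ∃ k, u = Matrix.vecMul k b := by
  let L : Submodule ℤ (Fin N → ℤ) := (V.restrictScalars ℤ).comap (castl N)
  obtain ⟨m, ⟨β⟩⟩ := Submodule.nonempty_basis_of_pid (Pi.basisFun ℤ (Fin N)) L
  have hli : LinearIndependent ℚ (fun i => castv (β i : Fin N → ℤ)) := by
    rw [← LinearIndependent.iff_fractionRing ℤ ℚ]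
    have h1 := β.linearIndependent.map' L.subtype (by simp)
    exact h1.map' (castl N) (LinearMap.ker_eq_bot.2 (castl_inj N))
  have hgen : ∀ u, castv u ∈ V → ∃ k : Fin m → ℤ, u = ∑ i, k i • (β i : Fin N → ℤ) := by
    intro u hu
    let x : L := ⟨u, hu⟩
    refine ⟨β.repr x, ?_⟩
    have := congrArg L.subtype (β.sum_repr x)
    rw [map_sum] at this
    simp only [map_smul] at this
    exact this.symm
  have hspan : Submodule.span ℚ (Set.range (fun i => castv (β i : Fin N → ℤ))) = V := by
    apply le_antisymm
    · rw [Submodule.span_le]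
      rintro _ ⟨i, rfl⟩
      exact (β i).2
    · intro v hv
      obtain ⟨D, hD⟩ := IsLocalization.exist_integer_multiples_of_finite (nonZeroDivisors ℤ) v
      choose u hu using hD
      have hu' : castv u = (D : ℤ) • v := by
        ext k
        have := hu k
        simpa [castv] using this
      have hD0 : ((D : ℤ) : ℚ) ≠ 0 := by
        exact_mod_cast nonZeroDivisors.coe_ne_zero D
      have hu2 : castv u ∈ V := by
        rw [hu']; exact V.smul_of_tower_mem _ hv
      obtain ⟨k, hk⟩ := hgen u hu2
      have h1 : castv u ∈ Submodule.span ℚ (Set.range (fun i => castv (β i : Fin N → ℤ))) := by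
        have : castv u = ∑ i, k i • castv (β i : Fin N → ℤ) := by
          have := congrArg (castl N) hk
          rw [map_sum] at this
          simp only [map_smul] at this
          exact this
        rw [this]
        exact Submodule.sum_mem _ fun i _ => Submodule.smul_of_tower_mem _ _
          (Submodule.subset_span ⟨i, rfl⟩)
      have : v = ((D : ℤ) : ℚ)⁻¹ • castv u := by
        rw [hu', ← Int.cast_smul_eq_zsmul ℚ, smul_smul, inv_mul_cancel₀ hD0, one_smul]
      rw [this]
      exact Submodule.smul_mem _ _ h1
  have hm : Module.finrank ℚ V = m := by
    rw [← hspan, finrank_span_eq_card hli, Fintype.card_fin]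
  rw [hm]
  refine ⟨fun i => (β i : Fin N → ℤ), hli, fun i => (β i).2, fun u hu => ?_⟩
  obtain ⟨k, hk⟩ := hgen u hu
  exact ⟨k, hk.trans (vecMul_eq_sum k _).symm⟩

/-- integral basis -/
noncomputable def ib {N : ℕ} (V : Submodule ℚ (Fin N → ℚ)) :
    Matrix (Fin (Module.finrank ℚ V)) (Fin N) ℤ := (exists_intbasis V).choose

lemma ib_li {N : ℕ} (V : Submodule ℚ (Fin N → ℚ)) :
    LinearIndependent ℚ (fun i => castv (ib V i)) := (exists_intbasis V).choose_spec.1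

lemma ib_mem {N : ℕ} (V : Submodule ℚ (Fin N → ℚ)) (i) : castv (ib V i) ∈ V :=
  (exists_intbasis V).choose_spec.2.1 i

lemma ib_gen {N : ℕ} (V : Submodule ℚ (Fin N → ℚ)) (u) (hu : castv u ∈ V) :
    ∃ k, u = Matrix.vecMul k (ib V) := (exists_intbasis V).choose_spec.2.2 u hu

lemma mm_ib_pos {N : ℕ} (V : Submodule ℚ (Fin N → ℚ)) : 0 < mm (ib V) :=
  lt_of_le_of_ne (mm_nonneg _) (mm_ne_zero _ (ib_li V)).symm

/-- covolume -/
noncomputable def cov {N : ℕ} (φ : (Fin N → ℤ) →+ ℚ_[p]) (t : ℕ) (V : Submodule ℚ (Fin N → ℚ)) : ℝ :=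
  mm (ib V) * max 1 ((p:ℝ) ^ t * ‖fun i => φ (ib V i)‖)

lemma phi_vecMul {j N : ℕ} (k : Fin j → ℤ) (b : Matrix (Fin j) (Fin N) ℤ)
    (φ : (Fin N → ℤ) →+ ℚ_[p]) (e : ℝ) (he : 0 ≤ e) (h : ∀ i, ‖φ (b i)‖ ≤ e) :
    ‖φ (Matrix.vecMul k b)‖ ≤ e := by
  rw [vecMul_eq_sum, map_sum]
  refine IsUltrametricDist.norm_sum_le_of_forall_le_of_nonneg he fun i _ => ?_
  rw [map_zsmul, zsmul_eq_mul, norm_mul]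
  exact (mul_le_of_le_one_left (norm_nonneg _) (Padic.norm_int_le_one _)).trans (h i)

lemma cov_ge {N : ℕ} (hN : 0 < N) (φ : (Fin N → ℤ) →+ ℚ_[p]) (t : ℕ) (R : ℝ) (hR : 0 < R)
    (h0 : ∀ v : Fin N → ℤ, v ≠ 0 → ‖φ v‖ ≤ ((p:ℝ)^t)⁻¹ → R ≤ ‖v‖)
    (V : Submodule ℚ (Fin N → ℚ)) : (R / (2 * N)) ^ (Module.finrank ℚ V) ≤ cov φ t V := by
  have hp : (0:ℝ) < p := by exact_mod_cast (Fact.out : p.Prime).pos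
  obtain ⟨T, hT, hTφ⟩ := exists_sublattice (ib V) φ t
  have hmm : mm (T * ib V) = cov φ t V := by rw [mm_mul, hT, mul_comm]; rfl
  have hcov : 0 < cov φ t V := mul_pos (mm_ib_pos V) (lt_max_of_lt_left one_pos)
  by_contra hlt
  push Not at hlt
  by_cases hj : Module.finrank ℚ V = 0
  · have h1 : 1 ≤ cov φ t V := by
      rw [← hmm]
      have : IsEmpty (Fin (Module.finrank ℚ V)) := by rw [hj]; infer_instance
      have h2 := norm_le_pi_norm (fun I : Fin (Module.finrank ℚ V) → Fin N =>
        ((T * ib V).submatrix id I).det) (fun i => isEmptyElim i)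
      rw [Matrix.det_isEmpty, norm_one] at h2
      exact h2
    rw [hj, pow_zero] at hlt
    linarith
  have hN' : (0:ℝ) < N := by exact_mod_cast hN
  obtain ⟨k, hk0, hk⟩ := minkowski hj (T * ib V) (by rw [hmm]; exact hcov.ne') (R / (2 * N))
    (by positivity) (by rw [hmm]; exact hlt.le)
  have h2 := h0 _ hk0 (phi_vecMul k _ φ _ (by positivity) hTφ)
  have h3 : ((Module.finrank ℚ V : ℕ) : ℝ) ≤ N := by
    have := Submodule.finrank_le V
    rw [Module.finrank_fin_fun] at this
    exact_mod_cast this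
  have h4 : (Module.finrank ℚ V : ℝ) * (R / (2 * N)) ≤ N * (R / (2 * N)) := by gcongr
  have h5 : N * (R / (2 * N)) = R / 2 := by field_simp
  linarith

lemma cov_le_mm {N : ℕ} (φ : (Fin N → ℤ) →+ ℚ_[p]) (t : ℕ) (W : Submodule ℚ (Fin N → ℚ)) (j : ℕ)
    (hj : j = Module.finrank ℚ W) (c : Matrix (Fin j) (Fin N) ℤ)
    (hc : LinearIndependent ℚ (fun i => castv (c i))) (hcW : ∀ i, castv (c i) ∈ W)
    (hφ : ∀ i, ‖φ (c i)‖ ≤ ((p:ℝ)^t)⁻¹) : cov φ t W ≤ mm c := by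
  subst hj
  choose T hT using fun i => ib_gen W (c i) (hcW i)
  have hcT : c = Matrix.of T * ib W := by
    ext i k
    rw [hT i]; rfl
  have h1 := mm_ne_zero c hc
  rw [hcT, mm_mul] at h1
  have h2 : (Matrix.of T).det ≠ 0 := by
    intro h; rw [h] at h1; simp at h1
  have h3 := le_det (ib W) φ t (Matrix.of T) h2 (by rw [← hcT]; exact hφ)
  rw [hcT, mm_mul, cov, mul_comm]
  exact mul_le_mul_of_nonneg_right h3 (mm_nonneg _)

lemma li_mul {j N : ℕ} (T : Matrix (Fin j) (Fin j) ℤ) (hT : T.det ≠ 0) (b : Matrix (Fin j) (Fin N) ℤ)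
    (hb : LinearIndependent ℚ (fun i => castv (b i))) :
    LinearIndependent ℚ (fun i => castv ((T * b) i)) := by
  set T' : Matrix (Fin j) (Fin j) ℚ := T.map (Int.cast : ℤ → ℚ) with hT'
  set B : Matrix (Fin j) (Fin N) ℚ := b.map (Int.cast : ℤ → ℚ) with hB
  have h1 : Function.Injective B.vecMul := Matrix.vecMul_injective_iff.2 hb
  have h2 : Function.Injective T'.vecMul := by
    apply Matrix.vecMul_injective_of_isUnit
    rw [Matrix.isUnit_iff_isUnit_det]
    have : T'.det = ((T.det : ℤ) : ℚ) := by rw [Int.cast_det]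
    rw [this]
    exact (Int.cast_ne_zero.2 hT).isUnit
  have h3 : Function.Injective (T' * B).vecMul := by
    intro x y hxy
    simp only [← Matrix.vecMul_vecMul] at hxy
    exact h2 (h1 hxy)
  have h4 := Matrix.vecMul_injective_iff.1 h3
  have h5 : (T' * B).row = fun i => castv ((T * b) i) := by
    ext i k
    simp [Matrix.row, castv, Matrix.mul_apply, hT', hB]
  rwa [h5] at h4

lemma cov_sup {N : ℕ} (φ : (Fin N → ℤ) →+ ℚ_[p]) (t : ℕ) (U : Submodule ℚ (Fin N → ℚ))
    (v : Fin N → ℤ) (hv : castv v ∉ U) (hφ : ‖φ v‖ ≤ ((p:ℝ)^t)⁻¹) :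
    Module.finrank ℚ (U ⊔ Submodule.span ℚ {castv v} : Submodule ℚ (Fin N → ℚ)) = Module.finrank ℚ U + 1 ∧
    cov φ t (U ⊔ Submodule.span ℚ {castv v}) ≤ (Module.finrank ℚ U + 1) * (cov φ t U * ‖v‖) := by
  obtain ⟨T, hT, hTφ⟩ := exists_sublattice (ib U) φ t
  have hT0 : T.det ≠ 0 := by
    intro h
    rw [h] at hT
    have : (1:ℝ) ≤ max 1 ((p:ℝ) ^ t * ‖fun i => φ (ib U i)‖) := le_max_left _ _
    rw [← hT] at this; norm_num at this
  have hmm : mm (T * ib U) = cov φ t U := by rw [mm_mul, hT, mul_comm]; rfl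
  have hmemU : ∀ i, castv ((T * ib U) i) ∈ U := by
    intro i
    have : castv ((T * ib U) i) = ∑ k, T i k • castv (ib U k) := by
      ext c; simp [castv, Matrix.mul_apply]
    rw [this]
    exact Submodule.sum_mem _ fun k _ => Submodule.smul_of_tower_mem _ _ (ib_mem U k)
  have hfr : Module.finrank ℚ (U ⊔ Submodule.span ℚ {castv v} : Submodule ℚ (Fin N → ℚ)) = Module.finrank ℚ U + 1 :=
    Submodule.finrank_sup_span_singleton hv
  refine ⟨hfr, ?_⟩
  rw [← hmm]
  refine le_trans ?_ (mm_cons (T * ib U) v)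
  apply cov_le_mm φ t _ _ hfr.symm
  · have : (fun i => castv ((Matrix.of (Fin.cons v (T * ib U) : Fin (Module.finrank ℚ U+1) → Fin N → ℤ)) i))
        = Fin.cons (castv v) (fun i => castv ((T * ib U) i)) := by
      funext i
      refine Fin.cases ?_ (fun i => ?_) i <;> rfl
    rw [this, linearIndependent_finCons]
    refine ⟨li_mul T hT0 _ (ib_li U), fun h => hv ?_⟩
    have : Submodule.span ℚ (Set.range (fun i => castv ((T * ib U) i))) ≤ U := by
      rw [Submodule.span_le]; rintro _ ⟨i, rfl⟩; exact hmemU i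
    exact this h
  · intro i
    refine Fin.cases ?_ (fun i => ?_) i
    · exact (le_sup_right : _ ≤ U ⊔ _) (Submodule.mem_span_singleton_self _)
    · exact (le_sup_left : U ≤ U ⊔ _) (hmemU i)
  · intro i
    refine Fin.cases ?_ (fun i => ?_) i
    · exact hφ
    · exact hTφ i

theorem lattice_nondiv (ν : Measure ℤ_[p]) [IsProbabilityMeasure ν] [ν.IsAddLeftInvariant]
    {N : ℕ} (hN : 0 < N) (Φ : ℤ_[p] → (Fin N → ℤ) →+ ℚ_[p]) (K : ℕ)
    (hΦ : ∀ v, ∃ Q : Polynomial ℚ_[p], Q.natDegree ≤ K ∧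
      ∀ z : ℤ_[p], ‖Φ z v‖ = ‖Q.eval (z : ℚ_[p])‖) (t l : ℕ) (R₀ : ℝ) (hR₀ : 0 < R₀)
    (h0 : ∀ v : Fin N → ℤ, v ≠ 0 → ‖Φ 0 v‖ ≤ ((p:ℝ)^t)⁻¹ → R₀ ≤ ‖v‖) :
    ν {z | ∃ v : Fin N → ℤ, v ≠ 0 ∧ ‖Φ z v‖ ≤ ((p:ℝ)^t)⁻¹ ∧
      (N + 1) * ‖v‖ < ((p:ℝ)^(K * l))⁻¹ * (R₀ / (2 * N))} ≤
      cc p (N + 1) * (K * ((p : ℝ≥0∞) ^ l)⁻¹) := by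
  have hp1 : (1:ℝ) < p := by exact_mod_cast (Fact.out : p.Prime).one_lt
  have hp : (0:ℝ) < p := by linarith
  have hN' : (0:ℝ) < N := by exact_mod_cast hN
  set R : ℝ := R₀ / (2 * N) with hR
  have hRpos : 0 < R := by positivity
  set η : ℝ := ((p:ℝ)^(K * l))⁻¹ with hη
  have hη0 : 0 < η := by positivity
  have hη1 : η ≤ 1 := inv_le_one_of_one_le₀ (one_le_pow₀ hp1.le)
  let dim : Submodule ℚ (Fin N → ℚ) → ℕ := fun V => Module.finrank ℚ V
  let compat : Submodule ℚ (Fin N → ℚ) → Submodule ℚ (Fin N → ℚ) → Prop :=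
    fun V W => V ≤ W ∨ W ≤ V
  let Ψ : Submodule ℚ (Fin N → ℚ) → ℤ_[p] → ℝ := fun V z => cov (Φ z) t V / R ^ (dim V)
  have hcd : ∀ V W, compat V W → V ≠ W → dim V ≠ dim W := by
    rintro V W (h | h) hne hd
    · exact hne (Submodule.eq_of_le_of_finrank_eq h hd)
    · exact hne (Submodule.eq_of_le_of_finrank_eq h hd.symm).symm
  have hcont : ∀ V, Continuous (Ψ V) := by
    intro V
    have h1 : ∀ z, ‖fun i => Φ z (ib V i)‖ = ‖fun i => ‖Φ z (ib V i)‖‖ := by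
      intro z
      simp [Pi.norm_def]
    simp only [Ψ, cov, h1]
    refine Continuous.div_const (continuous_const.mul (continuous_const.max (continuous_const.mul
      (continuous_norm.comp (continuous_pi fun i => ?_))))) _
    obtain ⟨Q, -, hQ⟩ := hΦ (ib V i)
    simp_rw [hQ]
    exact (Q.continuous.comp continuous_subtype_val).norm
  have H1 : ∀ V z, Ψ V z < 1 → ∃ k, ∀ w ∈ cyl p k z, Ψ V w < 1 := by
    intro V z hz
    have hopen : IsOpen {w | Ψ V w < 1} := isOpen_lt (hcont V) continuous_const
    obtain ⟨ε, hε, hball⟩ := Metric.isOpen_iff.1 hopen z hz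
    obtain ⟨k, hk⟩ := PadicInt.exists_pow_neg_lt p hε
    refine ⟨k, fun w hw => hball ?_⟩
    rw [mem_ball, dist_eq_norm]
    exact (mem_cyl_iff_norm.1 hw).trans_lt hk
  have H2 : ∀ V a k, (∃ z ∈ cyl p k a, 1 ≤ Ψ V z) →
      ν {z ∈ cyl p k a | Ψ V z < η} ≤ (K * ((p : ℝ≥0∞) ^ l)⁻¹) * ν (cyl p k a) := by
    rintro V a k ⟨z₀, hz₀, hΨ⟩
    have hr : 0 < R ^ dim V := by positivity
    have hm := mm_ib_pos V
    by_cases hc : (p:ℝ) ^ t * ‖fun i => Φ z₀ (ib V i)‖ ≤ 1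
    · have h1 : R ^ dim V ≤ mm (ib V) := by
        simp only [Ψ, cov] at hΨ
        rwa [max_eq_left hc, mul_one, one_le_div hr] at hΨ
      have : {z ∈ cyl p k a | Ψ V z < η} = ∅ := by
        rw [Set.eq_empty_iff_forall_notMem]
        rintro z ⟨-, hz⟩
        have : 1 ≤ Ψ V z := by
          simp only [Ψ]
          rw [one_le_div hr]
          exact h1.trans (le_mul_of_one_le_right hm.le (le_max_left _ _))
        linarith
      rw [this]; simp
    push Not at hc
    have hne : Nonempty (Fin (Module.finrank ℚ V)) := by
      by_contra h
      have := not_nonempty_iff.1 h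
      have h0 : (fun i => Φ z₀ (ib V i)) = 0 := Subsingleton.elim _ _
      rw [h0, norm_zero, mul_zero] at hc
      linarith
    obtain ⟨i₀, hi₀⟩ := Finite.exists_max (fun i => ‖Φ z₀ (ib V i)‖)
    have hn : ‖fun i => Φ z₀ (ib V i)‖ = ‖Φ z₀ (ib V i₀)‖ :=
      le_antisymm ((pi_norm_le_iff_of_nonneg (norm_nonneg _)).2 hi₀)
        (norm_le_pi_norm (fun i => Φ z₀ (ib V i)) i₀)
    obtain ⟨Q, hQd, hQ⟩ := hΦ (ib V i₀)
    have hM : 0 < R ^ dim V / (mm (ib V) * (p:ℝ) ^ t) := by positivity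
    refine le_trans (measure_mono ?_) (poly_good ν Q K hQd a k l (R ^ dim V / (mm (ib V) * (p:ℝ) ^ t))
      hM ⟨z₀, hz₀, ?_⟩)
    · rintro z ⟨hz, hzΨ⟩
      refine ⟨hz, ?_⟩
      rw [← hQ]
      have h1 : mm (ib V) * ((p:ℝ)^t * ‖Φ z (ib V i₀)‖) / R ^ dim V ≤ Ψ V z := by
        simp only [Ψ, cov]
        gcongr
        refine le_trans ?_ (le_max_right _ _)
        gcongr
        exact norm_le_pi_norm (fun i => Φ z (ib V i)) i₀
      have h2 := h1.trans_lt hzΨ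
      rw [div_lt_iff₀ hr] at h2
      rw [← hη, ← mul_div_assoc, lt_div_iff₀ (by positivity)]
      linarith
    · rw [← hQ, ← hn]
      simp only [Ψ, cov] at hΨ
      rw [max_eq_right hc.le, one_le_div hr] at hΨ
      rw [div_le_iff₀ (by positivity)]
      linarith
  have key := nondiv ν dim compat (fun V => Or.inl le_rfl) (fun V W h => h.symm) Ψ η
    (K * ((p : ℝ≥0∞) ^ l)⁻¹) hcd H1 H2 (N + 1) (Finset.range (N + 1)) (by simp) Set.univ
    (by
      intro V _
      have := Submodule.finrank_le V
      rw [Module.finrank_fin_fun] at this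
      exact Finset.mem_range.2 (Nat.lt_succ_of_le this)) 0 0 (by
      intro V _
      refine ⟨0, mem_cyl_self _ _, ?_⟩
      simp only [Ψ]
      rw [one_le_div (by positivity)]
      exact cov_ge hN (Φ 0) t R₀ hR₀ h0 V)
  rw [nu_cyl, pow_zero, inv_one, mul_one] at key
  refine le_trans (measure_mono ?_) key
  rintro z ⟨v, hv0, hvφ, hvlt⟩
  refine ⟨by rw [mem_cyl_iff_norm]; simpa using PadicInt.norm_le_one z, ?_⟩
  rintro ⟨F, -, hFc, hFη, hF⟩
  -- choose maximal U
  have hcast0 : castv v ≠ 0 := by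
    intro h
    exact hv0 (castl_inj N (h.trans (map_zero (castl N)).symm))
  have hexU : ∃ U : Submodule ℚ (Fin N → ℚ), (castv v ∉ U ∧ (U ∈ F ∨ U = ⊥)) ∧
      ∀ X, castv v ∉ X → X ∈ F → dim X ≤ dim U := by
    let A : Set (Submodule ℚ (Fin N → ℚ)) := {U | castv v ∉ U ∧ (U ∈ F ∨ U = ⊥)}
    have hA : A.Nonempty := ⟨⊥, by simpa using hcast0, Or.inr rfl⟩
    have hbd : BddAbove (dim '' A) := by
      refine ⟨N, ?_⟩
      rintro _ ⟨V, -, rfl⟩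
      have := Submodule.finrank_le V
      rwa [Module.finrank_fin_fun] at this
    obtain ⟨U, hU, hUd⟩ := Nat.sSup_mem (hA.image dim) hbd
    refine ⟨U, hU, fun X hX hXF => ?_⟩
    rw [hUd]
    exact le_csSup hbd ⟨X, ⟨hX, Or.inl hXF⟩, rfl⟩
  obtain ⟨U, ⟨hvU, hUF⟩, hUmax⟩ := hexU
  have hΨU : Ψ U z ≤ 1 := by
    rcases hUF with h | h
    · exact (hFη U h).2
    · subst h
      have h0 : Module.finrank ℚ (⊥ : Submodule ℚ (Fin N → ℚ)) = 0 := finrank_bot ℚ _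
      have hem : IsEmpty (Fin (Module.finrank ℚ (⊥ : Submodule ℚ (Fin N → ℚ)))) := by
        rw [h0]; infer_instance
      simp only [Ψ, cov, dim]
      have e1 : (fun i => Φ z (ib (⊥ : Submodule ℚ (Fin N → ℚ)) i)) = 0 := Subsingleton.elim _ _
      have e2 : R ^ Module.finrank ℚ (⊥ : Submodule ℚ (Fin N → ℚ)) = 1 := by rw [h0, pow_zero]
      rw [e1, norm_zero, mul_zero, e2, div_one, max_eq_left zero_le_one, mul_one]
      unfold mm
      rw [pi_norm_le_iff_of_nonneg zero_le_one]
      intro I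
      rw [Matrix.det_isEmpty, norm_one]
  have hcU : ∀ X ∈ F, X ≤ U ∨ U ≤ X := by
    intro X hX
    rcases hUF with h | h
    · exact hFc X hX U h
    · right; rw [h]; exact bot_le
  obtain ⟨hfr, hcov⟩ := cov_sup (Φ z) t U v hvU hvφ
  set W := U ⊔ Submodule.span ℚ {castv v} with hW
  have hWc : ∀ X ∈ F, compat W X := by
    intro X hX
    by_cases hvX : castv v ∈ X
    · left
      rcases hcU X hX with h | h
      · exact absurd (h hvX) hvU
      · refine sup_le h ?_
        rw [Submodule.span_singleton_le_iff_mem]; exact hvX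
    · right
      rcases hcU X hX with h | h
      · exact h.trans le_sup_left
      · have := Submodule.eq_of_le_of_finrank_le h (hUmax X hvX hX)
        rw [← this]; exact le_sup_left
  have hηW : η ≤ Ψ W z := by
    rcases hF W (Set.mem_univ _) hWc with h | h
    · exact (hFη W h).1
    · exact hη1.trans h
  have hU1 : cov (Φ z) t U ≤ R ^ dim U := by
    have := hΨU
    simp only [Ψ] at this
    rwa [div_le_one (by positivity)] at this
  have hW1 : η * R ^ (dim U + 1) ≤ cov (Φ z) t W := by
    have := hηW
    simp only [Ψ, dim] at this
    rw [le_div_iff₀ (by positivity), hfr] at this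
    exact this
  have hdU : (dim U : ℝ) ≤ N := by
    have := Submodule.finrank_le U
    rw [Module.finrank_fin_fun] at this
    exact_mod_cast this
  have : R ^ dim U * (η * R) ≤ R ^ dim U * ((N + 1) * ‖v‖) := by
    calc _ = η * R ^ (dim U + 1) := by ring
      _ ≤ (dim U + 1) * (cov (Φ z) t U * ‖v‖) := hW1.trans hcov
      _ ≤ (N + 1) * (R ^ dim U * ‖v‖) := by
        gcongr
        exact mul_nonneg (mul_nonneg (mm_nonneg _) (le_max_of_le_left zero_le_one)) (norm_nonneg _)
      _ = _ := by ring
  have := le_of_mul_le_mul_left this (by positivity)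
  linarith

/-- linear form -/
noncomputable def phi {n : ℕ} (y : Fin n → ℚ_[p]) : (Fin (n + 1) → ℤ) →+ ℚ_[p] where
  toFun v := (v 0 : ℚ_[p]) + ∑ i : Fin n, (v i.succ : ℚ_[p]) * y i
  map_zero' := by simp
  map_add' u v := by
    simp only [Pi.add_apply, Int.cast_add, add_mul, Finset.sum_add_distrib]; ring

lemma supNormR_cast {m : ℕ} (v : Fin (m + 1) → ℤ) : supNormR (fun i => (v i : ℚ)) = ‖v‖ := by
  unfold supNormR
  apply le_antisymm
  · refine ciSup_le fun i => ?_
    have := norm_le_pi_norm v i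
    rw [Int.norm_eq_abs] at this
    simpa using this
  · rw [pi_norm_le_iff_of_nonempty]
    intro i
    have := le_ciSup (Finite.bddAbove_range (fun i => |(((v i : ℤ) : ℚ) : ℝ)|)) i
    rw [Int.norm_eq_abs]
    simpa using this

lemma delta_bdd {n : ℕ} (y : Fin n → ℚ_[p]) (t : ℕ) :
    BddBelow { c : ℝ | ∃ qt : Fin (n + 1) → ℚ, (∀ i, IsZInvP p (qt i)) ∧ qt ≠ 0 ∧
    c = ((p : ℝ) ^ (-(t : ℝ) / ((n : ℝ) + 1)) * supNormR qt) *
        max (‖(((p : ℚ_[p]) ^ t)⁻¹ * ((qt 0 : ℚ_[p]) + ∑ i : Fin n, (qt i.succ : ℚ_[p]) * y i))‖)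
            (⨆ i : Fin n, ‖((qt i.succ : ℚ_[p]))‖) } := by
  refine ⟨0, ?_⟩
  rintro c ⟨qt, -, -, rfl⟩
  refine mul_nonneg (mul_nonneg (by positivity) ?_) (le_max_of_le_left (norm_nonneg _))
  exact Real.iSup_nonneg fun i => abs_nonneg _

lemma delta_le {n : ℕ} (y : Fin n → ℚ_[p]) (t : ℕ) (v : Fin (n + 1) → ℤ) (hv : v ≠ 0)
    (h : ‖phi y v‖ ≤ ((p:ℝ)^t)⁻¹) :
    deltaOne p y t ≤ (p : ℝ) ^ (-(t : ℝ) / ((n : ℝ) + 1)) * ‖v‖ := by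
  have hp : (0:ℝ) < p := by exact_mod_cast (Fact.out : p.Prime).pos
  unfold deltaOne
  refine (csInf_le (delta_bdd y t) ⟨fun i => (v i : ℚ), fun i => ⟨v i, 0, by simp⟩, ?_, rfl⟩).trans ?_
  · intro h0
    apply hv
    ext i
    have := congrFun h0 i
    simpa using this
  · rw [supNormR_cast]
    refine mul_le_of_le_one_right (by positivity) (max_le ?_ ?_)
    · have : (((v 0 : ℚ) : ℚ_[p]) + ∑ i : Fin n, ((v i.succ : ℚ) : ℚ_[p]) * y i) = phi y v := by
        simp [phi]
      rw [this, norm_mul, norm_inv, norm_pow, Padic.norm_p, inv_pow, inv_inv]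
      calc _ ≤ (p:ℝ)^t * ((p:ℝ)^t)⁻¹ := by gcongr
        _ = 1 := mul_inv_cancel₀ (by positivity)
    · refine Real.iSup_le (fun i => ?_) zero_le_one
      have := Padic.norm_int_le_one (p := p) (v i.succ)
      simpa using this

lemma zinvp_int {q : ℚ} (hq : IsZInvP p q) (h : ‖(q : ℚ_[p])‖ ≤ 1) : ∃ z : ℤ, q = z := by
  obtain ⟨z, k, rfl⟩ := hq
  have hp0 : (p:ℚ) ≠ 0 := by exact_mod_cast (Fact.out : p.Prime).ne_zero
  have hp : (0:ℝ) < p := by exact_mod_cast (Fact.out : p.Prime).pos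
  have h1 : ((p:ℤ) ^ k) ∣ z := by
    rw [← Padic.norm_int_le_pow_iff_dvd]
    push_cast at h
    rw [norm_div, norm_pow, Padic.norm_p, inv_pow, div_inv_eq_mul] at h
    rw [zpow_neg, zpow_natCast]
    rwa [← one_div, le_div_iff₀ (by positivity)]
  obtain ⟨w, rfl⟩ := h1
  refine ⟨w, ?_⟩
  push_cast
  field_simp

lemma zinvp_zpow {q : ℚ} (hq : IsZInvP p q) (e : ℤ) : IsZInvP p ((p:ℚ) ^ e * q) := by
  obtain ⟨z, k, rfl⟩ := hq
  have hp0 : (p:ℚ) ≠ 0 := by exact_mod_cast (Fact.out : p.Prime).ne_zero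
  obtain ⟨m, rfl | rfl⟩ := e.eq_nat_or_neg
  · exact ⟨p ^ m * z, k, by push_cast; rw [zpow_natCast]; ring⟩
  · refine ⟨z, k + m, ?_⟩
    rw [zpow_neg, zpow_natCast, pow_add]; field_simp

lemma scale {n : ℕ} (hn : 1 ≤ n) (y : Fin n → ℚ_[p]) (k : ℕ) (hk : ∀ i, ‖y i‖ ≤ (p:ℝ)^k) (t : ℕ)
    (qt : Fin (n + 1) → ℚ) (hq : ∀ i, IsZInvP p (qt i)) (hq0 : qt ≠ 0) :
    ∃ v : Fin (n + 1) → ℤ, v ≠ 0 ∧ ‖phi y v‖ ≤ ((p:ℝ)^t)⁻¹ ∧ ‖v‖ = (p:ℝ)^k * (supNormR qt *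
      max (‖(((p : ℚ_[p]) ^ t)⁻¹ * ((qt 0 : ℚ_[p]) + ∑ i : Fin n, (qt i.succ : ℚ_[p]) * y i))‖)
            (⨆ i : Fin n, ‖((qt i.succ : ℚ_[p]))‖)) := by
  have hp1 : (1:ℝ) < p := by exact_mod_cast (Fact.out : p.Prime).one_lt
  have hp : (0:ℝ) < p := by linarith
  have hpq : (p:ℚ_[p]) ≠ 0 := by exact_mod_cast (Fact.out : p.Prime).ne_zero
  have hpQ : (p:ℚ) ≠ 0 := by exact_mod_cast (Fact.out : p.Prime).ne_zero
  have hne : Nonempty (Fin n) := ⟨⟨0, hn⟩⟩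
  set x := ((p : ℚ_[p]) ^ t)⁻¹ * ((qt 0 : ℚ_[p]) + ∑ i : Fin n, (qt i.succ : ℚ_[p]) * y i) with hx
  obtain ⟨i₀, hi₀⟩ := exists_eq_ciSup_of_finite (f := fun i : Fin n => ‖((qt i.succ : ℚ_[p]))‖)
  have hle : ∀ i : Fin n, ‖((qt i.succ : ℚ_[p]))‖ ≤ ⨆ i : Fin n, ‖((qt i.succ : ℚ_[p]))‖ := fun i =>
    le_ciSup (Finite.bddAbove_range (fun i : Fin n => ‖((qt i.succ : ℚ_[p]))‖)) i
  set M := max ‖x‖ (⨆ i : Fin n, ‖((qt i.succ : ℚ_[p]))‖) with hM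
  have hMx : ‖x‖ ≤ M := le_max_left _ _
  have hMi : ∀ i : Fin n, ‖((qt i.succ : ℚ_[p]))‖ ≤ M := fun i => (hle i).trans (le_max_right _ _)
  have hMw : ∃ w : ℚ_[p], ‖w‖ = M := by
    rcases max_choice ‖x‖ (⨆ i : Fin n, ‖((qt i.succ : ℚ_[p]))‖) with h | h
    · exact ⟨x, h.symm⟩
    · exact ⟨qt i₀.succ, by rw [hM, h, ← hi₀]⟩
  have hM0 : M ≠ 0 := by
    intro h
    apply hq0
    have h1 : ∀ i : Fin n, qt i.succ = 0 := by
      intro i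
      have := hMi i
      rw [h] at this
      exact_mod_cast norm_le_zero_iff.1 this
    have h2 : x = 0 := by rw [h] at hMx; exact norm_le_zero_iff.1 hMx
    have h3 : qt 0 = 0 := by
      rw [hx] at h2
      simpa [h1, hpq] using h2
    ext i
    exact Fin.cases h3 h1 i
  obtain ⟨w, hw⟩ := hMw
  have hw0 : w ≠ 0 := by rintro rfl; exact hM0 (by rw [← hw]; simp)
  set e := -w.valuation with he
  have hMe : M = (p:ℝ) ^ e := by rw [← hw, Padic.norm_eq_zpow_neg_valuation hw0]
  have hnp : ‖(p:ℚ_[p]) ^ (e + k)‖ = M⁻¹ * ((p:ℝ)^k)⁻¹ := by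
    rw [norm_zpow, Padic.norm_p, inv_zpow, zpow_add₀ hp.ne', mul_inv, hMe, zpow_natCast]
  let r : Fin (n+1) → ℚ := fun i => (p:ℚ) ^ (e + k) * qt i
  have hMpos : 0 < M := lt_of_le_of_ne (le_max_of_le_left (norm_nonneg _)) hM0.symm
  have hk1 : ((p:ℝ)^k)⁻¹ ≤ 1 := inv_le_one_of_one_le₀ (one_le_pow₀ hp1.le)
  have hsm : ∀ a : ℚ_[p], ‖a‖ ≤ M → ‖(p:ℚ_[p]) ^ (e + k) * a‖ ≤ ((p:ℝ)^k)⁻¹ := by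
    intro a ha
    rw [norm_mul, hnp]
    calc M⁻¹ * ((p:ℝ)^k)⁻¹ * ‖a‖ ≤ M⁻¹ * ((p:ℝ)^k)⁻¹ * M := by gcongr
      _ = ((p:ℝ)^k)⁻¹ := by field_simp
  have hr : ∀ i, (r i : ℚ_[p]) = (p:ℚ_[p]) ^ (e + k) * qt i := by
    intro i; simp [r]
  have hrs : ∀ i : Fin n, ‖(r i.succ : ℚ_[p])‖ ≤ ((p:ℝ)^k)⁻¹ := fun i => by
    rw [hr]; exact hsm _ (hMi i)
  have hphi : (r 0 : ℚ_[p]) + ∑ i : Fin n, (r i.succ : ℚ_[p]) * y i =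
      (p:ℚ_[p])^t * ((p:ℚ_[p]) ^ (e + k) * x) := by
    simp_rw [hr, hx]
    simp_rw [mul_assoc, ← Finset.mul_sum, ← mul_add]
    rw [mul_left_comm ((p:ℚ_[p])^t), ← mul_assoc ((p:ℚ_[p])^t), mul_inv_cancel₀ (pow_ne_zero _ hpq), one_mul]
  have hphin : ‖(r 0 : ℚ_[p]) + ∑ i : Fin n, (r i.succ : ℚ_[p]) * y i‖ ≤ ((p:ℝ)^t)⁻¹ := by
    rw [hphi, norm_mul, norm_pow, Padic.norm_p, inv_pow]
    exact mul_le_of_le_one_right (by positivity) ((hsm x hMx).trans hk1)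
  have ht1 : ((p:ℝ)^t)⁻¹ ≤ 1 := inv_le_one_of_one_le₀ (one_le_pow₀ hp1.le)
  have hr0 : ‖(r 0 : ℚ_[p])‖ ≤ 1 := by
    have h1 : ‖∑ i : Fin n, (r i.succ : ℚ_[p]) * y i‖ ≤ 1 := by
      refine IsUltrametricDist.norm_sum_le_of_forall_le_of_nonneg zero_le_one fun i _ => ?_
      rw [norm_mul]
      calc _ ≤ ((p:ℝ)^k)⁻¹ * (p:ℝ)^k := by
            gcongr
            · exact hrs i
            · exact hk i
        _ = 1 := inv_mul_cancel₀ (by positivity)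
    have h2 := IsUltrametricDist.norm_add_le_max ((r 0 : ℚ_[p]) + ∑ i : Fin n, (r i.succ : ℚ_[p]) * y i)
      (-∑ i : Fin n, (r i.succ : ℚ_[p]) * y i)
    rw [norm_neg, add_neg_cancel_right] at h2
    exact h2.trans (max_le (hphin.trans ht1) h1)
  have hint : ∀ i, ∃ z : ℤ, r i = z := by
    intro i
    refine zinvp_int (zinvp_zpow (hq i) _) ?_
    refine Fin.cases hr0 (fun i => ?_) i
    exact (hrs i).trans hk1
  choose v hv using hint
  have hvr : ∀ i, (r i : ℚ_[p]) = (v i : ℚ_[p]) := by intro i; rw [hv i]; simp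
  refine ⟨v, ?_, ?_, ?_⟩
  · rintro rfl
    apply hq0
    ext i
    have := hv i
    simp only [r, Pi.zero_apply, Int.cast_zero] at this
    rcases mul_eq_zero.1 this with h | h
    · exact absurd h (zpow_ne_zero _ hpQ)
    · exact h
  · simp_rw [hvr] at hphin
    exact hphin
  · rw [← supNormR_cast]
    have : (fun i => ((v i : ℤ) : ℚ)) = r := by funext i; exact (hv i).symm
    rw [this]
    unfold supNormR
    have h1 : ∀ i, |(r i : ℝ)| = (p:ℝ)^(e + k) * |(qt i : ℝ)| := by
      intro i
      simp only [r]
      push_cast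
      rw [abs_mul, abs_of_pos (by positivity)]
    simp_rw [h1]
    rw [← Real.mul_iSup_of_nonneg (by positivity), zpow_add₀ hp.ne', ← hMe, zpow_natCast]
    ring

lemma delta_ge {n : ℕ} (hn : 1 ≤ n) (y : Fin n → ℚ_[p]) (k : ℕ) (hk : ∀ i, ‖y i‖ ≤ (p:ℝ)^k) (t : ℕ)
    (R : ℝ) (h : ∀ v, v ≠ 0 → ‖phi y v‖ ≤ ((p:ℝ)^t)⁻¹ → R ≤ ‖v‖) :
    (p : ℝ) ^ (-(t : ℝ) / ((n : ℝ) + 1)) * (((p:ℝ)^k)⁻¹ * R) ≤ deltaOne p y t := by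
  have hp : (0:ℝ) < p := by exact_mod_cast (Fact.out : p.Prime).pos
  unfold deltaOne
  apply le_csInf
  · refine ⟨_, fun _ => 1, fun i => ⟨1, 0, by simp⟩, ?_, rfl⟩
    intro h; have := congrFun h 0; simp at this
  · rintro c ⟨qt, hq, hq0, rfl⟩
    obtain ⟨v, hv0, hv, hvn⟩ := scale hn y k hk t qt hq hq0
    have h1 := h v hv0 hv
    rw [hvn] at h1
    rw [mul_assoc]
    refine mul_le_mul_of_nonneg_left ?_ (by positivity)
    rwa [inv_mul_le_iff₀ (by positivity)]

/-- good points -/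
def Good {n : ℕ} (y : Fin n → ℚ_[p]) (γ : ℝ) : Prop :=
  ∀ m : ℕ, ∃ T : ℕ, ∀ t, T ≤ t → ∀ v : Fin (n+1) → ℤ, v ≠ 0 → ‖phi y v‖ ≤ ((p:ℝ)^t)⁻¹ →
    (p:ℝ) ^ ((t:ℝ) * (1 / ((n:ℝ) + 1) - γ - 1 / ((m:ℝ) + 1))) ≤ ‖v‖

lemma exists_k {n : ℕ} (y : Fin n → ℚ_[p]) : ∃ k : ℕ, ∀ i, ‖y i‖ ≤ (p:ℝ)^k := by
  have hp1 : (1:ℝ) < p := by exact_mod_cast (Fact.out : p.Prime).one_lt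
  obtain ⟨k, hk⟩ := pow_unbounded_of_one_lt ‖y‖ hp1
  exact ⟨k, fun i => (norm_le_pi_norm y i).trans hk.le⟩

lemma good_iff {n : ℕ} (hn : 1 ≤ n) (y : Fin n → ℚ_[p]) (γ : ℝ) (hγ : 0 ≤ γ) :
    gammaExp p y ≤ γ ↔ Good y γ := by
  have hp1 : (1:ℝ) < p := by exact_mod_cast (Fact.out : p.Prime).one_lt
  have hp : (0:ℝ) < p := by linarith
  obtain ⟨k, hk⟩ := exists_k y
  have hn' : (0:ℝ) < (n:ℝ) + 1 := by positivity
  constructor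
  · intro hg m
    have hm : (0:ℝ) < 1 / ((m:ℝ)+1) := by positivity
    have hbdd : BddAbove {c : ℝ | 0 ≤ c ∧ ∀ N : ℕ, ∃ t : ℕ, N ≤ t ∧
        deltaOne p y t ≤ (p : ℝ) ^ (-(c * (t : ℝ)))} := by
      refine ⟨k + 1, ?_⟩
      rintro c ⟨hc0, hc⟩
      obtain ⟨t, ht, hδ⟩ := hc 1
      have h1 := delta_ge hn y k hk t 1 (fun v hv _ => by
        have : ∃ i, v i ≠ 0 := by
          by_contra h
          push Not at h
          exact hv (funext h)
        obtain ⟨i, hi⟩ := this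
        refine le_trans ?_ (norm_le_pi_norm v i)
        rw [Int.norm_eq_abs]
        exact_mod_cast Int.one_le_abs hi)
      have h2 := h1.trans hδ
      rw [mul_one, ← Real.rpow_natCast, ← Real.rpow_neg hp.le, ← Real.rpow_add hp,
        Real.rpow_le_rpow_left_iff hp1] at h2
      have ht' : (1:ℝ) ≤ t := by exact_mod_cast ht
      have h3 : (t:ℝ) / ((n:ℝ)+1) ≤ t := div_le_self (by positivity) (by linarith [(Nat.cast_nonneg n : (0:ℝ) ≤ n)])
      rw [neg_div] at h2
      have h4 : (k:ℝ) ≤ k * t := le_mul_of_one_le_right (by positivity) ht'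
      have h5 : c * t ≤ (k + 1) * t := by linarith
      exact le_of_mul_le_mul_right h5 (by linarith)
    have hnot : ¬ (γ + 1 / ((m:ℝ)+1)) ∈ {c : ℝ | 0 ≤ c ∧ ∀ N : ℕ, ∃ t : ℕ, N ≤ t ∧
        deltaOne p y t ≤ (p : ℝ) ^ (-(c * (t : ℝ)))} := by
      intro hmem
      have := (le_csSup hbdd hmem).trans hg
      linarith
    simp only [Set.mem_ofPred_eq, not_and, not_forall, not_exists, not_le] at hnot
    obtain ⟨T, hT⟩ := hnot (by positivity)
    refine ⟨T, fun t ht v hv hφ => ?_⟩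
    have h1 := (hT t ht).le.trans (delta_le y t v hv hφ)
    have h2 : (p:ℝ) ^ ((t:ℝ) * (1 / ((n:ℝ) + 1) - γ - 1 / ((m:ℝ) + 1))) =
        (p:ℝ) ^ ((t:ℝ) / ((n:ℝ)+1)) * (p:ℝ) ^ (-((γ + 1 / ((m:ℝ)+1)) * (t : ℝ))) := by
      rw [← Real.rpow_add hp]; congr 1; ring
    rw [h2]
    calc _ ≤ (p:ℝ) ^ ((t:ℝ) / ((n:ℝ)+1)) * ((p : ℝ) ^ (-(t : ℝ) / ((n : ℝ) + 1)) * ‖v‖) := by gcongr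
      _ = ‖v‖ := by
        rw [← mul_assoc, ← Real.rpow_add hp, neg_div, add_neg_cancel, Real.rpow_zero, one_mul]
  · intro hg
    refine Real.sSup_le ?_ hγ
    rintro c ⟨hc0, hc⟩
    by_contra hlt
    push Not at hlt
    obtain ⟨m, hm⟩ := exists_nat_one_div_lt (sub_pos.2 hlt)
    obtain ⟨T, hT⟩ := hg m
    set e := c - γ - 1 / ((m:ℝ)+1) with he
    have hepos : 0 < e := by linarith
    obtain ⟨T', hT'⟩ := exists_nat_gt ((k:ℝ) / e)
    obtain ⟨t, ht, hδ⟩ := hc (max T T')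
    have h1 := (delta_ge hn y k hk t _ (hT t ((le_max_left _ _).trans ht))).trans hδ
    rw [← Real.rpow_natCast, ← Real.rpow_neg hp.le, ← Real.rpow_add hp, ← Real.rpow_add hp,
        Real.rpow_le_rpow_left_iff hp1] at h1
    have h2 : (t:ℝ) * e ≤ k := by
      rw [he]
      have : -(t:ℝ) / ((n:ℝ) + 1) = - ((t:ℝ) * (1 / ((n:ℝ)+1))) := by ring
      rw [this] at h1
      linarith
    have h3 : ((T':ℕ):ℝ) ≤ t := by exact_mod_cast (le_max_right _ _).trans ht
    rw [div_lt_iff₀ hepos] at hT'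
    have : (T':ℝ) * e ≤ t * e := by gcongr
    linarith

lemma tsum_div_ne_top (q : ℕ) (hq : 0 < q) : ∑' t : ℕ, ((p:ℝ≥0∞) ^ (t / q))⁻¹ ≠ ⊤ := by
  have : NeZero q := ⟨hq.ne'⟩
  have hp1 : (1:ℝ≥0∞) < p := by exact_mod_cast (Fact.out : p.Prime).one_lt
  have h1 : ∑' t : ℕ, ((p:ℝ≥0∞) ^ (t / q))⁻¹ = ∑' x : ℕ × Fin q, ((p:ℝ≥0∞) ^ x.1)⁻¹ := by
    rw [← (Nat.divModEquiv q).tsum_eq (fun x : ℕ × Fin q => ((p:ℝ≥0∞) ^ x.1)⁻¹)]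
    rfl
  rw [h1, ENNReal.tsum_prod']
  simp only [tsum_fintype, Finset.sum_const, Finset.card_univ, Fintype.card_fin, nsmul_eq_mul]
  rw [ENNReal.tsum_mul_left]
  refine ENNReal.mul_ne_top (ENNReal.natCast_ne_top q) ?_
  simp_rw [ENNReal.inv_pow]
  rw [ENNReal.tsum_geometric]
  simp only [ne_eq, ENNReal.inv_eq_top]
  rw [tsub_eq_zero_iff_le, not_le]
  exact ENNReal.inv_lt_one.2 hp1

lemma ae_good (ν : Measure ℤ_[p]) [IsProbabilityMeasure ν] [ν.IsAddLeftInvariant] {n : ℕ}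
    (g : ℤ_[p] → Fin n → ℚ_[p]) (K : ℕ)
    (hPG : ∀ v : Fin (n + 1) → ℤ, ∃ Q : Polynomial ℚ_[p], Q.natDegree ≤ K ∧
      ∀ z : ℤ_[p], ‖phi (g z) v‖ = ‖Q.eval (z:ℚ_[p])‖)
    (γ : ℝ) (h : Good (g 0) γ) : ∀ᵐ z ∂ν, Good (g z) γ := by
  have hp1 : (1:ℝ) < p := by exact_mod_cast (Fact.out : p.Prime).one_lt
  have hp : (0:ℝ) < p := by linarith
  unfold Good
  rw [ae_all_iff]
  intro m
  set A := 1 / ((n:ℝ) + 1) - γ with hA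
  obtain ⟨T, hT⟩ := h (2 * m + 1)
  set ε : ℝ := 1 / (((2 * m + 1 : ℕ) : ℝ) + 1) with hε
  have hε0 : 0 < ε := by positivity
  have hεm : ε = 1 / (2 * ((m:ℝ)+1)) := by rw [hε]; push_cast; congr 1; ring
  set q := K * (4 * (m + 1)) + 1 with hq
  set N := n + 1 with hN
  have hKl : ∀ t : ℕ, ((K * (t / q) : ℕ) : ℝ) ≤ ε / 2 * t := by
    intro t
    have h1 : (K * (4 * (m+1))) * (t / q) ≤ t := by
      refine le_trans (Nat.mul_le_mul_right _ (Nat.le_succ _)) (Nat.mul_div_le t q)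
    have h2 : (((K * (4 * (m+1))) * (t / q) : ℕ) : ℝ) ≤ t := by exact_mod_cast h1
    rw [hεm]
    have hm : (0:ℝ) < (m:ℝ) + 1 := by positivity
    push_cast at h2 ⊢
    have : 1 / (2 * ((m:ℝ) + 1)) / 2 * t = t / (4 * (m+1)) := by field_simp; norm_num; ring
    rw [this, le_div_iff₀ (by positivity)]
    linarith
  let S : ℕ → Set ℤ_[p] := fun t => {z | T ≤ t ∧ ∃ v : Fin N → ℤ, v ≠ 0 ∧
    ‖phi (g z) v‖ ≤ ((p:ℝ)^t)⁻¹ ∧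
    ((N:ℝ)+1)*‖v‖ < ((p:ℝ)^(K*(t/q)))⁻¹*((p:ℝ) ^ ((t:ℝ) * (A - ε))/(2*N))}
  have hS : ∀ t, ν (S t) ≤ cc p (N+1) * (K * ((p:ℝ≥0∞)^(t/q))⁻¹) := by
    intro t
    by_cases ht : T ≤ t
    · refine le_trans (measure_mono ?_) (lattice_nondiv ν (Nat.succ_pos n) (fun z => phi (g z)) K hPG t (t/q)
        ((p:ℝ) ^ ((t:ℝ) * (A - ε))) (by positivity) (hT t ht))
      rintro z ⟨-, hz⟩
      exact hz
    · have : S t = ∅ := by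
        ext z; simp only [S, ht, false_and, Set.mem_empty_iff_false, iff_false]; exact fun h => h
      rw [this]; simp
  have hsum : ∑' t, ν (S t) ≠ ⊤ := by
    refine ne_top_of_le_ne_top ?_ (ENNReal.tsum_le_tsum hS)
    rw [ENNReal.tsum_mul_left, ENNReal.tsum_mul_left]
    exact ENNReal.mul_ne_top (cc_ne_top _) (ENNReal.mul_ne_top (ENNReal.natCast_ne_top _)
      (tsum_div_ne_top q (Nat.succ_pos _)))
  have hT2 : ∃ T2 : ℕ, ∀ t : ℕ, T2 ≤ t → (2 * (N:ℝ)) * ((N:ℝ)+1) ≤ (p:ℝ) ^ ((t:ℝ) * (ε / 2)) := by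
    have h1 : Filter.Tendsto (fun t : ℕ => (p:ℝ) ^ ((t:ℝ) * (ε / 2))) Filter.atTop Filter.atTop := by
      have h2 : Filter.Tendsto (fun x : ℝ => (p:ℝ) ^ x) Filter.atTop Filter.atTop :=
        tendsto_rpow_atTop_of_base_gt_one _ hp1
      refine h2.comp ?_
      exact tendsto_natCast_atTop_atTop.atTop_mul_const (by positivity)
    exact Filter.eventually_atTop.1 (h1.eventually_ge_atTop _)
  obtain ⟨T2, hT2⟩ := hT2
  filter_upwards [ae_eventually_notMem hsum] with z hz
  obtain ⟨T1, hT1⟩ := Filter.eventually_atTop.1 hz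
  refine ⟨max T (max T1 T2), fun t ht v hv hφ => ?_⟩
  have htT : T ≤ t := (le_max_left _ _).trans ht
  have ht1 : T1 ≤ t := ((le_max_left _ _).trans (le_max_right _ _)).trans ht
  have ht2 : T2 ≤ t := ((le_max_right _ _).trans (le_max_right _ _)).trans ht
  have h1 : ((p:ℝ)^(K*(t/q)))⁻¹*((p:ℝ) ^ ((t:ℝ) * (A - ε))/(2*N)) ≤ ((N:ℝ)+1)*‖v‖ := by
    by_contra hlt
    push Not at hlt
    exact hT1 t ht1 ⟨htT, v, hv, hφ, hlt⟩
  have hNpos : (0:ℝ) < N := by rw [hN]; positivity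
  have h3 : (p:ℝ) ^ (-(ε/2 * t)) ≤ ((p:ℝ)^(K*(t/q)))⁻¹ := by
    rw [← Real.rpow_natCast, ← Real.rpow_neg hp.le, Real.rpow_le_rpow_left_iff hp1]
    linarith [hKl t]
  have h4 : (p:ℝ) ^ (-(ε/2 * t)) * ((p:ℝ) ^ ((t:ℝ) * (A - ε))/(2*N)) ≤ ((N:ℝ)+1)*‖v‖ :=
    le_trans (mul_le_mul_of_nonneg_right h3 (by positivity)) h1
  rw [← mul_div_assoc, div_le_iff₀ (by positivity), ← Real.rpow_add hp] at h4
  have h5 : (p:ℝ) ^ (-(ε/2 * t) + (t:ℝ) * (A - ε)) ≤ (p:ℝ) ^ ((t:ℝ) * (ε / 2)) * ‖v‖ := by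
    refine h4.trans ?_
    calc _ = ((2 * (N:ℝ)) * ((N:ℝ)+1)) * ‖v‖ := by ring
      _ ≤ _ := mul_le_mul_of_nonneg_right (hT2 t ht2) (norm_nonneg _)
  have h6 : (p:ℝ) ^ (-(ε/2 * t) + (t:ℝ) * (A - ε)) =
      (p:ℝ) ^ ((t:ℝ) * (ε / 2)) * (p:ℝ) ^ ((t:ℝ) * (A - 1 / ((m:ℝ)+1))) := by
    rw [← Real.rpow_add hp]
    congr 1
    have : 1 / ((m:ℝ)+1) = 2 * ε := by rw [hεm]; field_simp
    rw [this]; ring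
  rw [h6] at h5
  exact le_of_mul_le_mul_left h5 (by positivity)

lemma phi_cons {n : ℕ} (y : Fin n → ℚ_[p]) (v : Fin (n+1) → ℤ) :
    phi y v = (v 0 : ℚ_[p]) + ∑ i : Fin n, (v i.succ : ℚ_[p]) * y i := rfl

lemma line_poly {n d : ℕ} {f : (Fin d → ℚ_[p]) → (Fin n → ℚ_[p])} {x₀ : Fin d → ℚ_[p]}
    {P : FormalMultilinearSeries ℚ_[p] (Fin d → ℚ_[p]) (Fin n → ℚ_[p])} {r : ℝ≥0∞}
    (hP : HasFPowerSeriesOnBall f P x₀ r) (v : Fin d → ℚ_[p]) (hv : v ∈ Metric.eball 0 r) :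
    ∃ K : ℕ, ∀ w : Fin (n + 1) → ℤ, ∃ Q : Polynomial ℚ_[p], Q.natDegree ≤ K ∧
      ∀ z : ℤ_[p], ‖phi (f (x₀ + ((p:ℚ_[p]) * z) • v)) w‖ = ‖Q.eval (z:ℚ_[p])‖ := by
  let a : Fin (n+1) → ℕ → ℚ_[p] := Fin.cons (fun k => if k = 0 then 1 else 0)
    (fun i k => P k (fun _ => v) i)
  have ha : ∀ i, Filter.Tendsto (a i) Filter.atTop (nhds 0) := by
    intro i
    refine Fin.cases ?_ (fun i => ?_) i
    · refine tendsto_const_nhds.congr' ?_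
      filter_upwards [Filter.eventually_gt_atTop 0] with k hk
      simp [a, hk.ne']
    · have h1 := (hP.hasSum hv)
      have h2 := (Pi.hasSum.1 h1 i).summable.tendsto_atTop_zero
      exact h2
  obtain ⟨K, hK⟩ := analytic_poly a ha
  refine ⟨K, fun w => ?_⟩
  obtain ⟨Q, hQ, hz⟩ := hK (fun i => (w i : ℚ_[p]))
  refine ⟨Q, hQ, fun z => ?_⟩
  rw [← hz z, Fin.sum_univ_succ, phi_cons]
  congr 2
  · have : ∑' k : ℕ, a 0 k * ((p:ℚ_[p]) * z)^k = 1 := by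
      rw [tsum_eq_single 0]
      · simp [a]
      · intro k hk; simp [a, hk]
    rw [this, mul_one]
  · refine Finset.sum_congr rfl fun i _ => ?_
    congr 1
    have hs : ‖(p:ℚ_[p]) * z‖ ≤ 1 := by
      rw [norm_mul]
      exact mul_le_one₀ (Padic.norm_p_lt_one (p := p)).le (norm_nonneg _) (PadicInt.norm_le_one z)
    have hmem : ((p:ℚ_[p]) * z) • v ∈ Metric.eball 0 r := by
      rw [mem_eball_zero_iff] at hv ⊢
      refine lt_of_le_of_lt ?_ hv
      rw [enorm_smul]
      refine mul_le_of_le_one_left (zero_le) ?_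
      rw [← ofReal_norm]
      exact ENNReal.ofReal_le_one.2 hs
    have h1 := Pi.hasSum.1 (hP.hasSum hmem) i
    rw [← h1.tsum_eq]
    refine tsum_congr fun k => ?_
    have := (P k).map_smul_univ (fun _ => (p:ℚ_[p]) * z) (fun _ => v)
    rw [this]
    simp [a, mul_comm]

lemma measurable_good {n : ℕ} (γ : ℝ) : MeasurableSet {y : Fin n → ℚ_[p] | Good y γ} := by
  have hphi : ∀ v : Fin (n+1) → ℤ, Continuous fun y : Fin n → ℚ_[p] => ‖phi y v‖ := by
    intro v
    simp_rw [phi_cons]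
    fun_prop
  unfold Good
  refine measurableSet_setOfPred.2 ?_
  refine Measurable.forall fun m => Measurable.exists fun T => Measurable.forall fun t => ?_
  refine Measurable.imp measurable_const ?_
  refine Measurable.forall fun v => ?_
  refine Measurable.imp measurable_const ?_
  refine Measurable.imp ?_ measurable_const
  exact measurableSet_setOfPred.1 (isClosed_le (hphi v) continuous_const).measurableSet

lemma main_local {n d : ℕ} {f : (Fin d → ℚ_[p]) → (Fin n → ℚ_[p])} {x₀ : Fin d → ℚ_[p]}
    {P : FormalMultilinearSeries ℚ_[p] (Fin d → ℚ_[p]) (Fin n → ℚ_[p])} {r : ℝ≥0∞}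
    (hP : HasFPowerSeriesOnBall f P x₀ r) (ρ : ℝ) (hρr : ENNReal.ofReal ρ ≤ r)
    (γ : ℝ) (hg : Good (f x₀) γ) (μ : Measure (Fin d → ℚ_[p])) [μ.IsAddHaarMeasure] :
    ∀ᵐ x ∂μ, x ∈ Metric.ball x₀ (ρ / p) → Good (f x) γ := by
  classical
  have hp1 : (1:ℝ) < p := by exact_mod_cast (Fact.out : p.Prime).one_lt
  have hp : (0:ℝ) < p := by linarith
  have hpq : (p:ℚ_[p]) ≠ 0 := by exact_mod_cast (Fact.out : p.Prime).ne_zero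
  set V : Set (Fin d → ℚ_[p]) := Metric.ball 0 ρ with hV
  have hVe : ∀ v ∈ V, v ∈ Metric.eball (0 : Fin d → ℚ_[p]) r := by
    intro v hv
    rw [hV, mem_ball_zero_iff] at hv
    rw [mem_eball_zero_iff, ← ofReal_norm]
    refine lt_of_lt_of_le ?_ hρr
    exact (ENNReal.ofReal_lt_ofReal_iff_of_nonneg (norm_nonneg _)).2 hv
  let F : (Fin d → ℚ_[p]) → (Fin n → ℚ_[p]) := V.piecewise (fun v => f (x₀ + v)) (fun _ => f x₀)
  have hF : Measurable F := by
    refine ContinuousOn.measurable_piecewise ?_ continuousOn_const measurableSet_ball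
    refine hP.continuousOn.comp (by fun_prop) ?_
    intro v hv
    have := hVe v hv
    rw [Metric.mem_eball] at this ⊢
    simpa [edist_eq_enorm_sub] using this
  let ν : Measure ℤ_[p] := Measure.addHaarMeasure ⊤
  have hν1 : IsProbabilityMeasure ν := ⟨by
    have := Measure.addHaarMeasure_self (K₀ := (⊤ : TopologicalSpace.PositiveCompacts ℤ_[p]))
    simpa [ν] using this⟩
  have hsm : ∀ z : ℤ_[p], ∀ v ∈ V, ((p:ℚ_[p]) * z) • v ∈ V := by
    intro z v hv
    rw [hV, mem_ball_zero_iff] at hv ⊢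
    rw [norm_smul, norm_mul]
    refine lt_of_le_of_lt (mul_le_of_le_one_left (norm_nonneg _) ?_) hv
    exact mul_le_one₀ (Padic.norm_p_lt_one (p := p)).le (norm_nonneg _) (PadicInt.norm_le_one z)
  have hmeas : Measurable fun x : (Fin d → ℚ_[p]) × ℤ_[p] => ((p:ℚ_[p]) * x.2) • x.1 := by
    refine Continuous.measurable ?_
    exact (continuous_const.mul (continuous_subtype_val.comp continuous_snd)).smul continuous_fst
  have key : ∀ᵐ v ∂(μ.restrict V), ∀ᵐ z : ℤ_[p] ∂ν, Good (F (((p:ℚ_[p]) * z) • v)) γ := by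
    rw [ae_restrict_iff' measurableSet_ball]
    refine Filter.Eventually.of_forall fun v hv => ?_
    obtain ⟨K, hK⟩ := line_poly hP v (hVe v hv)
    have h1 := ae_good ν (fun z : ℤ_[p] => f (x₀ + ((p:ℚ_[p]) * z) • v)) K hK γ (by simpa using hg)
    filter_upwards [h1] with z hz
    simp only [F]
    rw [Set.piecewise_eq_of_mem _ _ _ (hsm z v hv)]
    exact hz
  rw [Measure.ae_ae_comm (p := fun v (z : ℤ_[p]) => Good (F (((p:ℚ_[p]) * z) • v)) γ)
    (measurable_good γ |>.preimage (hF.comp hmeas))] at key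
  have hpos : 0 < ν {z : ℤ_[p] | ‖z - 1‖ < 1} := by
    refine IsOpen.measure_pos ν (isOpen_lt (by fun_prop) continuous_const) ⟨1, ?_⟩
    simp
  have hex : ∃ z : ℤ_[p], ‖z‖ = 1 ∧ ∀ᵐ v ∂(μ.restrict V), Good (F (((p:ℚ_[p]) * z) • v)) γ := by
    by_contra hcon
    refine hpos.ne' (measure_mono_null ?_ (ae_iff.1 key))
    intro z hz
    refine fun hgood => hcon ⟨z, ?_, hgood⟩
    by_contra h1
    have hz1 : ‖z - 1‖ < 1 := hz
    have h2 : ‖z‖ < 1 := lt_of_le_of_ne (PadicInt.norm_le_one z) h1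
    have h3 := PadicInt.nonarchimedean z (-(z - 1))
    rw [norm_neg, show z + -(z - 1) = 1 by ring, norm_one] at h3
    exact absurd (max_lt h2 hz1) (not_lt.2 h3)
  obtain ⟨z, hz1, hz⟩ := hex
  rw [ae_restrict_iff' measurableSet_ball] at hz
  set c : ℚ_[p] := (p:ℚ_[p]) * z with hc
  have hz0 : (z:ℚ_[p]) ≠ 0 := by
    intro h
    have : ‖(z:ℚ_[p])‖ = 1 := hz1
    rw [h, norm_zero] at this
    exact zero_ne_one this
  have hc0 : c ≠ 0 := mul_ne_zero hpq hz0
  have hcn : ‖c⁻¹‖ = p := by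
    have : ‖(z:ℚ_[p])‖ = 1 := hz1
    rw [norm_inv, hc, norm_mul, this, mul_one, Padic.norm_p, inv_inv]
  let L : (Fin d → ℚ_[p]) ≃L[ℚ_[p]] (Fin d → ℚ_[p]) := ContinuousLinearEquiv.smulLeft (Units.mk0 c hc0)⁻¹
  have hL : ∀ x, L x = c⁻¹ • x := fun x => rfl
  have hac : μ.map L ≪ μ := Measure.absolutelyContinuous_isAddHaarMeasure _ _
  have hLm : Measurable L := L.continuous.measurable
  have hz2 : ∀ᵐ x ∂μ, L x ∈ V → Good (F (c • L x)) γ := ae_of_ae_map hLm.aemeasurable (hac.ae_le hz)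
  have hz3 := (measurePreserving_sub_right μ x₀).quasiMeasurePreserving.ae hz2
  filter_upwards [hz3] with x hx hxW
  have hmem : L (x - x₀) ∈ V := by
    rw [hL, hV, mem_ball_zero_iff, norm_smul, hcn]
    rw [mem_ball_iff_norm, lt_div_iff₀ hp] at hxW
    linarith
  have h4 := hx hmem
  have h5 : c • L (x - x₀) = x - x₀ := by rw [hL, smul_inv_smul₀ hc0]
  rw [h5] at h4
  have h6 : x - x₀ ∈ V := h5 ▸ hsm z _ hmem
  simp only [F] at h4
  rw [Set.piecewise_eq_of_mem _ _ _ h6, add_sub_cancel] at h4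
  exact h4

end Aux

/-- If `f : U → ℚ_p^n` is analytic on an open `U ⊆ ℚ_p^d`, `γ₀ ≥ 0` and
`γ(f(x₀)) ≤ γ₀` for some `x₀ ∈ U`, then for Haar-almost every `x` in a neighbourhood of
`x₀` one has `γ(f(x)) ≤ γ₀`. -/
theorem statement4 (p : ℕ) [Fact p.Prime] (n d : ℕ) (hn : 1 ≤ n) (hd : 1 ≤ d)
    (U : Set (Fin d → ℚ_[p])) (hU : IsOpen U)
    (f : (Fin d → ℚ_[p]) → (Fin n → ℚ_[p])) (hf : AnalyticOnNhd ℚ_[p] f U)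
    (γ₀ : ℝ) (hγ₀ : 0 ≤ γ₀) (x₀ : Fin d → ℚ_[p]) (hx₀ : x₀ ∈ U)
    (hg : gammaExp p (f x₀) ≤ γ₀) :
    ∃ W : Set (Fin d → ℚ_[p]), W ∈ nhds x₀ ∧
      ∀ (μ : Measure (Fin d → ℚ_[p])), μ.IsAddHaarMeasure →
        ∀ᵐ x ∂μ, x ∈ W → gammaExp p (f x) ≤ γ₀ := by
  obtain ⟨P, r, hP⟩ := hf x₀ hx₀
  have hp1 : (1:ℝ) < p := by exact_mod_cast (Fact.out : p.Prime).one_lt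
  obtain ⟨ρ, hρ0, hρr⟩ : ∃ ρ : ℝ, 0 < ρ ∧ ENNReal.ofReal ρ ≤ r := by
    obtain ⟨q, hq0, hqr⟩ := ENNReal.lt_iff_exists_nnreal_btwn.1 hP.r_pos
    exact ⟨q, by exact_mod_cast hq0, by rw [ENNReal.ofReal_coe_nnreal]; exact hqr.le⟩
  refine ⟨Metric.ball x₀ (ρ / p), Metric.ball_mem_nhds _ (div_pos hρ0 (by linarith)), fun μ hμ => ?_⟩
  have h := main_local hP ρ hρr γ₀ ((good_iff hn _ γ₀ hγ₀).1 hg) μ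
  filter_upwards [h] with x hx hxW
  exact (good_iff hn _ γ₀ hγ₀).2 (hx hxW)

end PadicDioph
end

section
/- Let p be a prime and n ≥ 1. For every y ∈ ℚ_p^n one has w_p(y) = (n(1 + γ(y)) + γ(y)) / (1 − (n+1)γ(y)), with the convention that the right-hand side equals +∞ when γ(y) ≥ 1/(n+1) and that the equality is an equality of elements of [0, +∞]. -/
open MeasureTheory Metric
open scoped ENNReal NNReal

namespace PadicDioph

variable (p : ℕ) [Fact p.Prime]

section helpers

set_option linter.unusedSectionVars false

lemma p_one_lt : (1 : ℝ) < p := by exact_mod_cast (Fact.out : p.Prime).one_lt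

noncomputable def PP {n : ℕ} (qt : Fin (n + 1) → ℚ) : ℝ := ⨆ i : Fin n, ‖((qt i.succ : ℚ_[p]))‖

noncomputable def LL {n : ℕ} (y : Fin n → ℚ_[p]) (qt : Fin (n + 1) → ℚ) : ℝ :=
  ‖((qt 0 : ℚ_[p]) + ∑ i : Fin n, (qt i.succ : ℚ_[p]) * y i)‖

noncomputable def XX {n : ℕ} (qt : Fin (n + 1) → ℚ) : ℝ := PP p qt * supNormR qt

noncomputable def ZZ {n : ℕ} (y : Fin n → ℚ_[p]) (qt : Fin (n + 1) → ℚ) : ℝ :=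
  LL p y qt * supNormR qt

lemma norm_int_mul {z : ℤ} (hz : z ≠ 0) : 1 ≤ |(z : ℝ)| * ‖(z : ℚ_[p])‖ := by
  have hp := p_one_lt p
  have hz' : (z : ℚ_[p]) ≠ 0 := by exact_mod_cast hz
  have h1 := Padic.norm_eq_zpow_neg_valuation hz'
  have hv : (z : ℚ_[p]).valuation = (padicValInt p z : ℤ) := by simp
  rw [hv] at h1
  have h2 := (Padic.norm_int_le_pow_iff_dvd z (padicValInt p z)).1 h1.le
  have h3 := Int.le_of_dvd (abs_pos.2 hz) ((dvd_abs _ _).2 h2)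
  have h4 : (p : ℝ) ^ (padicValInt p z) ≤ |(z : ℝ)| := by exact_mod_cast h3
  rw [h1, zpow_neg, zpow_natCast, ← div_eq_mul_inv, le_div_iff₀ (by positivity), one_mul]
  exact h4

lemma zinv_mul {q : ℚ} (hq : IsZInvP p q) (h0 : q ≠ 0) : 1 ≤ |(q : ℝ)| * ‖(q : ℚ_[p])‖ := by
  have hp := p_one_lt p
  obtain ⟨z, k, rfl⟩ := hq
  have hz : z ≠ 0 := by rintro rfl; simp at h0
  have := norm_int_mul p hz
  push_cast
  rw [abs_div, norm_div, Padic.norm_p_pow, abs_of_pos (show (0:ℝ) < (p:ℝ)^k by positivity), zpow_neg,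
    zpow_natCast]
  have hpk : (0:ℝ) < (p:ℝ)^k := by positivity
  field_simp
  exact this

lemma zinv_int {q : ℚ} (hq : IsZInvP p q) (h1 : ‖(q : ℚ_[p])‖ ≤ 1) : ∃ z : ℤ, q = z := by
  have hp := p_one_lt p
  obtain ⟨z, k, rfl⟩ := hq
  push_cast at h1
  rw [norm_div, Padic.norm_p_pow, div_le_iff₀ (by positivity), one_mul,
    Padic.norm_int_le_pow_iff_dvd] at h1
  obtain ⟨w, rfl⟩ := h1
  refine ⟨w, ?_⟩
  have : (p : ℚ) ≠ 0 := by exact_mod_cast (Fact.out : p.Prime).ne_zero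
  push_cast
  field_simp

lemma zinv_mul_zpow {q : ℚ} (hq : IsZInvP p q) (k : ℤ) : IsZInvP p ((p : ℚ) ^ k * q) := by
  obtain ⟨z, m, rfl⟩ := hq
  have hp : (p : ℚ) ≠ 0 := by exact_mod_cast (Fact.out : p.Prime).ne_zero
  obtain ⟨a, rfl | rfl⟩ := k.eq_nat_or_neg
  · exact ⟨p ^ a * z, m, by push_cast; rw [zpow_natCast]; ring⟩
  · refine ⟨z, a + m, ?_⟩
    rw [zpow_neg, zpow_natCast]; field_simp; ring

lemma zinv_int_mul {q : ℚ} (hq : IsZInvP p q) (k : ℤ) : IsZInvP p ((k : ℚ) * q) := by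
  obtain ⟨z, m, rfl⟩ := hq
  exact ⟨k * z, m, by push_cast; ring⟩

lemma zinv_of_int (z : ℤ) : IsZInvP p (z : ℚ) := ⟨z, 0, by simp⟩

variable {n : ℕ}

lemma le_R (qt : Fin (n + 1) → ℚ) (i) : |(qt i : ℝ)| ≤ supNormR qt :=
  le_ciSup (f := fun i => |(qt i : ℝ)|) (Set.finite_range _).bddAbove i

lemma le_P (qt : Fin (n + 1) → ℚ) (i : Fin n) : ‖(qt i.succ : ℚ_[p])‖ ≤ PP p qt :=
  le_ciSup (f := fun i : Fin n => ‖(qt i.succ : ℚ_[p])‖) (Set.finite_range _).bddAbove i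

lemma R_nonneg (qt : Fin (n + 1) → ℚ) : 0 ≤ supNormR qt := (abs_nonneg _).trans (le_R qt 0)
lemma P_nonneg (qt : Fin (n + 1) → ℚ) : 0 ≤ PP p qt := Real.iSup_nonneg fun _ => norm_nonneg _
lemma L_nonneg (y : Fin n → ℚ_[p]) (qt : Fin (n + 1) → ℚ) : 0 ≤ LL p y qt := norm_nonneg _
lemma X_nonneg (qt : Fin (n + 1) → ℚ) : 0 ≤ XX p qt := mul_nonneg (P_nonneg p qt) (R_nonneg qt)
lemma Z_nonneg (y : Fin n → ℚ_[p]) (qt : Fin (n + 1) → ℚ) : 0 ≤ ZZ p y qt :=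
  mul_nonneg (L_nonneg p y qt) (R_nonneg qt)

lemma R_pos {qt : Fin (n + 1) → ℚ} (h : qt ≠ 0) : 0 < supNormR qt := by
  obtain ⟨i, hi⟩ := Function.ne_iff.1 h
  refine lt_of_lt_of_le ?_ (le_R qt i)
  have : (qt i : ℝ) ≠ 0 := by exact_mod_cast hi
  positivity

lemma R_smul (r : ℚ) (qt : Fin (n + 1) → ℚ) :
    supNormR (fun i => r * qt i) = |(r : ℝ)| * supNormR qt := by
  unfold supNormR
  rw [Real.mul_iSup_of_nonneg (abs_nonneg _)]
  simp [abs_mul]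

lemma P_smul (r : ℚ) (qt : Fin (n + 1) → ℚ) :
    PP p (fun i => r * qt i) = ‖(r : ℚ_[p])‖ * PP p qt := by
  unfold PP
  rw [Real.mul_iSup_of_nonneg (norm_nonneg _)]
  simp

lemma L_smul (y : Fin n → ℚ_[p]) (r : ℚ) (qt : Fin (n + 1) → ℚ) :
    LL p y (fun i => r * qt i) = ‖(r : ℚ_[p])‖ * LL p y qt := by
  unfold LL
  rw [← norm_mul, mul_add, Finset.mul_sum]
  simp [mul_assoc]

lemma X_smul (r : ℚ) (qt : Fin (n + 1) → ℚ) :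
    XX p (fun i => r * qt i) = (|(r : ℝ)| * ‖(r : ℚ_[p])‖) * XX p qt := by
  unfold XX; rw [P_smul, R_smul]; ring

lemma Z_smul (y : Fin n → ℚ_[p]) (r : ℚ) (qt : Fin (n + 1) → ℚ) :
    ZZ p y (fun i => r * qt i) = (|(r : ℝ)| * ‖(r : ℚ_[p])‖) * ZZ p y qt := by
  unfold ZZ; rw [L_smul, R_smul]; ring

lemma zpow_unit (k : ℤ) : |(((p : ℚ) ^ k : ℚ) : ℝ)| * ‖(((p : ℚ) ^ k : ℚ) : ℚ_[p])‖ = 1 := by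
  have hp := p_one_lt p
  push_cast
  rw [Padic.norm_p_zpow, abs_of_pos (by positivity), zpow_neg]
  exact mul_inv_cancel₀ (by positivity)

/-- nonzero tail gives `X ≥ 1`. -/
lemma one_le_X {qt : Fin (n + 1) → ℚ} (hq : ∀ i, IsZInvP p (qt i)) {i : Fin n}
    (hi : qt i.succ ≠ 0) : 1 ≤ XX p qt := by
  refine (zinv_mul p (hq _) hi).trans ?_
  rw [mul_comm]
  exact mul_le_mul (le_P p qt i) (le_R qt _) (abs_nonneg _) (P_nonneg p qt)

lemma one_le_Z (y : Fin n → ℚ_[p]) {qt : Fin (n + 1) → ℚ} (hq : ∀ i, IsZInvP p (qt i)) (h0 : qt ≠ 0)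
    (hi : ∀ i : Fin n, qt i.succ = 0) : 1 ≤ ZZ p y qt := by
  have h : qt 0 ≠ 0 := by
    intro h; apply h0; funext i
    refine Fin.cases h hi i
  refine (zinv_mul p (hq _) h).trans ?_
  rw [mul_comm]
  refine mul_le_mul ?_ (le_R qt _) (abs_nonneg _) (L_nonneg p y qt)
  simp [LL, hi]

noncomputable def content (y : Fin n → ℚ_[p]) (t : ℕ) (qt : Fin (n + 1) → ℚ) : ℝ :=
  (p : ℝ) ^ (-(t : ℝ) / ((n : ℝ) + 1)) * max ((p : ℝ) ^ (t : ℝ) * ZZ p y qt) (XX p qt)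

lemma content_nonneg (y : Fin n → ℚ_[p]) (t : ℕ) (qt : Fin (n + 1) → ℚ) : 0 ≤ content p y t qt :=
  mul_nonneg (by positivity) ((X_nonneg p qt).trans (le_max_right _ _))

lemma deltaOne_eq (y : Fin n → ℚ_[p]) (t : ℕ) : deltaOne p y t =
    sInf {c : ℝ | ∃ qt : Fin (n + 1) → ℚ, (∀ i, IsZInvP p (qt i)) ∧ qt ≠ 0 ∧
      c = content p y t qt} := by
  unfold deltaOne
  have : ∀ qt : Fin (n + 1) → ℚ, ((p : ℝ) ^ (-(t : ℝ) / ((n : ℝ) + 1)) * supNormR qt) *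
        max (‖(((p : ℚ_[p]) ^ t)⁻¹ * ((qt 0 : ℚ_[p]) + ∑ i : Fin n, (qt i.succ : ℚ_[p]) * y i))‖)
            (⨆ i : Fin n, ‖((qt i.succ : ℚ_[p]))‖) = content p y t qt := by
    intro qt
    rw [norm_mul, norm_inv, Padic.norm_p_pow, zpow_neg, inv_inv, zpow_natCast, content, mul_assoc,
      ← mul_max_of_nonneg _ _ (R_nonneg qt) |>.symm, Real.rpow_natCast]
    unfold ZZ XX PP LL
    congr 2 <;> ring
  simp only [this]

lemma delta_le_s5 (y : Fin n → ℚ_[p]) (t : ℕ) {qt : Fin (n + 1) → ℚ} (hq : ∀ i, IsZInvP p (qt i))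
    (h0 : qt ≠ 0) : deltaOne p y t ≤ content p y t qt := by
  rw [deltaOne_eq]
  refine csInf_le ⟨0, ?_⟩ ⟨qt, hq, h0, rfl⟩
  rintro _ ⟨q, -, -, rfl⟩
  exact content_nonneg p y t q

lemma exists_of_delta_lt (y : Fin n → ℚ_[p]) (t : ℕ) {a : ℝ} (h : deltaOne p y t < a) :
    ∃ qt : Fin (n + 1) → ℚ, (∀ i, IsZInvP p (qt i)) ∧ qt ≠ 0 ∧ content p y t qt < a := by
  rw [deltaOne_eq] at h
  have hne : {c : ℝ | ∃ qt : Fin (n + 1) → ℚ, (∀ i, IsZInvP p (qt i)) ∧ qt ≠ 0 ∧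
      c = content p y t qt}.Nonempty := ⟨_, fun _ => ((1 : ℤ) : ℚ), fun _ => zinv_of_int p 1, by
      intro h; simpa using congrFun h 0, rfl⟩
  obtain ⟨_, ⟨q, h1, h2, rfl⟩, h3⟩ := exists_lt_of_csInf_lt hne h
  exact ⟨q, h1, h2, h3⟩

lemma le_content (y : Fin n → ℚ_[p]) (t : ℕ) {qt : Fin (n + 1) → ℚ} (hq : ∀ i, IsZInvP p (qt i))
    (h0 : qt ≠ 0) : (p : ℝ) ^ (-(t : ℝ) / ((n : ℝ) + 1)) ≤ content p y t qt := by
  have hp := p_one_lt p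
  refine le_mul_of_one_le_right (by positivity) ?_
  by_cases h : ∀ i : Fin n, qt i.succ = 0
  · refine le_max_of_le_left ?_
    have := one_le_Z p y hq h0 h
    have h2 : 1 ≤ (p:ℝ) ^ (t:ℝ) := Real.one_le_rpow hp.le (by positivity)
    nlinarith
  · push Not at h
    obtain ⟨i, hi⟩ := h
    exact le_max_of_le_right (one_le_X p hq hi)

lemma le_delta (y : Fin n → ℚ_[p]) (t : ℕ) :
    (p : ℝ) ^ (-(t : ℝ) / ((n : ℝ) + 1)) ≤ deltaOne p y t := by
  rw [deltaOne_eq]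
  refine le_csInf ⟨_, fun _ => ((1 : ℤ) : ℚ), fun _ => zinv_of_int p 1, by
      intro h; simpa using congrFun h 0, rfl⟩ ?_
  rintro _ ⟨q, h1, h2, rfl⟩
  exact le_content p y t h1 h2

lemma bdd (y : Fin n → ℚ_[p]) : BddAbove {c : ℝ | 0 ≤ c ∧ ∀ N : ℕ, ∃ t : ℕ, N ≤ t ∧
    deltaOne p y t ≤ (p : ℝ) ^ (-(c * (t : ℝ)))} := by
  refine ⟨1 / ((n:ℝ) + 1), ?_⟩
  rintro c ⟨-, hc⟩
  obtain ⟨t, ht, h⟩ := hc 1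
  have h2 := (le_delta p y t).trans h
  rw [Real.rpow_le_rpow_left_iff (p_one_lt p)] at h2
  have ht' : (0:ℝ) < t := by exact_mod_cast ht
  have : c * t ≤ (1 / ((n:ℝ)+1)) * t := by
    have : -(t:ℝ) / (n+1) = - ((1 / ((n:ℝ)+1)) * t) := by ring
    linarith
  exact le_of_mul_le_mul_right this ht'

lemma gamma_nonneg (y : Fin n → ℚ_[p]) : 0 ≤ gammaExp p y := Real.sSup_nonneg fun _ h => h.1

lemma wpCond_iff (y : Fin n → ℚ_[p]) (v : ℝ) : WpCond p y v ↔
    ∀ T : ℝ, ∃ qt : Fin (n + 1) → ℚ, (∀ i, IsZInvP p (qt i)) ∧ T < XX p qt ∧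
      LL p y qt < (XX p qt) ^ (-v) * (supNormR qt)⁻¹ := by
  refine forall_congr' fun T => ⟨?_, ?_⟩
  · rintro ⟨q0, q, h0, h1, h2, h3⟩
    refine ⟨Fin.cons q0 q, fun i => Fin.cases h0 h1 i, h2, ?_⟩
    rw [add_comm] at h3
    exact h3
  · rintro ⟨qt, h0, h2, h3⟩
    refine ⟨qt 0, fun i => qt i.succ, h0 0, fun i => h0 _, ?_, ?_⟩
    · rw [show (Fin.cons (qt 0) fun i => qt i.succ) = qt from Fin.cons_self_tail qt]
      exact h2
    · rw [show (Fin.cons (qt 0) fun i => qt i.succ) = qt from Fin.cons_self_tail qt, add_comm]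
      exact h3

lemma dirA (y : Fin n → ℚ_[p]) {v : ℝ} (hv : 0 < v) (h : WpCond p y v) :
    (v - n) / ((n + 1) * (v + 1)) ≤ gammaExp p y := by
  have hp := p_one_lt p
  have hp0 : (0:ℝ) < p := by linarith
  rw [wpCond_iff] at h
  refine le_of_forall_lt fun c hc => ?_
  obtain ⟨c', hc1, hc'⟩ := exists_between hc
  refine hc1.trans_le ?_
  rcases lt_or_ge c' 0 with hneg | hpos
  · exact hneg.le.trans (gamma_nonneg p y)
  refine le_csSup (bdd p y) ⟨hpos, fun N => ?_⟩
  set d := (v - n) / ((n + 1) * (v + 1)) with hd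
  set M : ℝ := max N (1 / (d - c')) with hM
  have hM0 : 0 ≤ M := le_max_of_le_left (by positivity)
  obtain ⟨qt, hq, hX, hL⟩ := h ((p:ℝ) ^ M)
  have hX1 : 1 < XX p qt := (Real.one_le_rpow hp.le hM0).trans_lt hX
  have hX0 : 0 < XX p qt := by linarith
  have hR : 0 < supNormR qt := by
    rcases (R_nonneg qt).lt_or_eq with h | h
    · exact h
    · exfalso; unfold XX at hX0; rw [← h] at hX0; simp at hX0
  have h0 : qt ≠ 0 := by
    rintro rfl
    unfold supNormR at hR; simp at hR
  have hZ : ZZ p y qt < XX p qt ^ (-v) := by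
    unfold ZZ
    rwa [← div_eq_mul_inv, lt_div_iff₀ hR] at hL
  set x := Real.logb p (XX p qt) with hx
  have hXx : XX p qt = (p:ℝ) ^ x := (Real.rpow_logb hp0 hp.ne' hX0).symm
  rw [hXx, Real.rpow_lt_rpow_left_iff hp] at hX
  have hx0 : 0 ≤ x := hM0.trans hX.le
  set t := ⌈(v + 1) * x⌉₊ with ht
  have ht1 : (v+1) * x ≤ t := Nat.le_ceil _
  have ht2 : (t:ℝ) < (v+1) * x + 1 := Nat.ceil_lt_add_one (by positivity)
  have hxt : x ≤ t := by nlinarith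
  refine ⟨t, ?_, ?_⟩
  · have : (N:ℝ) ≤ t := (le_max_left _ _).trans (hX.le.trans hxt)
    exact_mod_cast this
  refine (delta_le_s5 p y t hq h0).trans ?_
  have hmax : max ((p : ℝ) ^ (t : ℝ) * ZZ p y qt) (XX p qt) ≤ (p:ℝ) ^ (x + 1) := by
    refine max_le ?_ ?_
    · calc (p : ℝ) ^ (t : ℝ) * ZZ p y qt ≤ (p : ℝ) ^ (t : ℝ) * (p:ℝ) ^ (x * (-v)) := by
            rw [Real.rpow_mul hp0.le, ← hXx]; gcongr
        _ = (p:ℝ) ^ (t + x * (-v)) := (Real.rpow_add hp0 _ _).symm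
        _ ≤ _ := Real.rpow_le_rpow_of_exponent_le hp.le (by nlinarith)
    · rw [hXx]; exact Real.rpow_le_rpow_of_exponent_le hp.le (by linarith)
  calc content p y t qt ≤ (p : ℝ) ^ (-(t : ℝ) / ((n : ℝ) + 1)) * (p:ℝ) ^ (x + 1) := by
        unfold content; gcongr
    _ = (p : ℝ) ^ (-(t : ℝ) / ((n : ℝ) + 1) + (x+1)) := (Real.rpow_add hp0 _ _).symm
    _ ≤ _ := Real.rpow_le_rpow_of_exponent_le hp.le ?_
  have hn1 : (0:ℝ) < n + 1 := by positivity
  have e1 : d = 1 / (n+1) - 1 / (v+1) := by rw [hd]; field_simp; ring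
  have e2 : x ≤ t / (v+1) := by rw [le_div_iff₀ (by positivity)]; linarith
  have e3 : 1 / (d - c') ≤ t := (le_max_right _ _).trans (hX.le.trans hxt)
  rw [div_le_iff₀ (by linarith)] at e3
  have e4 : (t:ℝ) * d = t / (n+1) - t / (v+1) := by rw [e1]; ring
  have e5 : -(t : ℝ) / ((n : ℝ) + 1) = - (t / (n+1)) := by ring
  rw [e5]
  nlinarith

lemma exists_K (y : Fin n → ℚ_[p]) : ∃ K : ℕ, ∀ i, ‖y i‖ ≤ (p:ℝ) ^ K := by
  have hp := p_one_lt p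
  obtain ⟨B, hB⟩ := (Set.finite_range fun i => ‖y i‖).bddAbove
  obtain ⟨K, hK⟩ := pow_unbounded_of_one_lt B hp
  exact ⟨K, fun i => (hB ⟨i, rfl⟩).trans hK.le⟩

lemma dirichlet (y : Fin n → ℚ_[p]) : ∃ K : ℕ, ∀ t : ℕ, ∃ qt : Fin (n + 1) → ℚ,
    (∀ i, IsZInvP p (qt i)) ∧ qt ≠ 0 ∧ content p y t qt ≤ (p:ℝ) ^ K := by
  have hp := p_one_lt p
  have hp0 : (0:ℝ) < p := by linarith
  have hpQ : (p : ℚ) ≠ 0 := by exact_mod_cast (Fact.out : p.Prime).ne_zero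
  obtain ⟨K, hK⟩ := exists_K p y
  refine ⟨K, fun t => ?_⟩
  have hz : ∀ i, ‖(p : ℚ_[p]) ^ K * y i‖ ≤ 1 := by
    intro i
    rw [norm_mul, Padic.norm_p_pow, zpow_neg, zpow_natCast, inv_mul_le_iff₀ (by positivity), mul_one]
    exact hK i
  let z : Fin n → ℤ_[p] := fun i => ⟨_, hz i⟩
  let r : ℝ := (p:ℝ) ^ ((t:ℝ) / ((n:ℝ) + 1))
  have hr : 0 ≤ r := by positivity
  let M : ℕ := ⌊r⌋₊
  have hM1 : (M : ℝ) ≤ r := Nat.floor_le hr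
  have hM2 : r < M + 1 := Nat.lt_floor_add_one r
  have hrp : r ^ (n + 1) = (p:ℝ) ^ t := by
    rw [← Real.rpow_natCast, ← Real.rpow_mul hp0.le]
    push_cast
    rw [div_mul_cancel₀ _ (by positivity), Real.rpow_natCast]
  have hcard : p ^ t < (M + 1) ^ (n + 1) := by
    have : (p:ℝ) ^ t < ((M:ℝ) + 1) ^ (n + 1) := by
      rw [← hrp]; exact pow_lt_pow_left₀ hM2 hr (by simp)
    exact_mod_cast this
  have : NeZero (p ^ t) := ⟨pow_ne_zero _ (Fact.out : p.Prime).ne_zero⟩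
  let F : (Fin (n + 1) → Fin (M + 1)) → ℤ_[p] := fun a =>
    ((a 0 : ℕ) : ℤ_[p]) + ∑ i : Fin n, ((a i.succ : ℕ) : ℤ_[p]) * z i
  obtain ⟨a, b, hab, hF⟩ := Fintype.exists_ne_map_eq_of_card_lt
    (fun a => PadicInt.toZModPow t (F a)) (by simpa [ZMod.card] using hcard)
  have hF' : ‖F a - F b‖ ≤ (p:ℝ) ^ (-t : ℤ) := by
    rw [PadicInt.norm_le_pow_iff_mem_span_pow, ← PadicInt.ker_toZModPow, RingHom.mem_ker, map_sub,
      sub_eq_zero]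
    exact hF
  let e : Fin (n + 1) → ℤ := fun i => ((a i : ℕ) : ℤ) - ((b i : ℕ) : ℤ)
  have he : ∀ i, |(e i : ℝ)| ≤ M := by
    intro i
    have h1 : |e i| ≤ M := by
      have := (a i).2; have := (b i).2
      rw [abs_le]; constructor <;> simp only [e] <;> omega
    exact_mod_cast h1
  have hpK : (1:ℝ) ≤ (p:ℝ) ^ K := one_le_pow₀ hp.le
  refine ⟨Fin.cons (e 0 : ℚ) fun i => (p:ℚ) ^ K * (e i.succ : ℚ), ?_, ?_, ?_⟩
  · intro i
    refine Fin.cases (zinv_of_int p _) (fun i => ?_) i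
    have := zinv_mul_zpow p (zinv_of_int p (e i.succ)) K
    simpa using this
  · intro h
    apply hab
    have h0 : ∀ i, e i = 0 := by
      intro i
      refine Fin.cases ?_ (fun i => ?_) i
      · simpa using congrFun h 0
      · have := congrFun h i.succ
        simpa [hpQ, (Fact.out : p.Prime).ne_zero] using this
    funext i
    have := h0 i
    simp only [e] at this
    ext; omega
  set qt : Fin (n + 1) → ℚ := Fin.cons (e 0 : ℚ) fun i => (p:ℚ) ^ K * (e i.succ : ℚ) with hqt
  have hR : supNormR qt ≤ (p:ℝ) ^ K * r := by
    refine ciSup_le fun i => ?_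
    refine Fin.cases ?_ (fun i => ?_) i
    · simp only [hqt, Fin.cons_zero]
      have := he 0
      push_cast
      nlinarith
    · simp only [hqt, Fin.cons_succ]
      push_cast
      rw [abs_mul, abs_of_nonneg (by positivity : (0:ℝ) ≤ (p:ℝ)^K)]
      have := he i.succ
      gcongr
      linarith
  have hP : PP p qt ≤ 1 := by
    refine Real.iSup_le (fun i => ?_) zero_le_one
    have : qt i.succ = (((p:ℤ) ^ K * e i.succ : ℤ) : ℚ) := by simp [hqt]
    rw [this, Rat.cast_intCast]
    exact Padic.norm_int_le_one _
  have hL : LL p y qt ≤ (p:ℝ) ^ (-t : ℤ) := by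
    refine le_trans (le_of_eq ?_) hF'
    have hzc : ∀ i, (z i : ℚ_[p]) = (p : ℚ_[p]) ^ K * y i := fun i => rfl
    rw [PadicInt.norm_def]
    unfold LL
    congr 1
    simp only [F, hqt, Fin.cons_zero, Fin.cons_succ, e]
    push_cast
    rw [PadicInt.coe_sum, PadicInt.coe_sum]
    push_cast
    simp only [hzc]
    rw [add_sub_add_comm, ← Finset.sum_sub_distrib]
    congr 1
    refine Finset.sum_congr rfl fun i _ => ?_
    ring
  have hRn := R_nonneg qt
  have hmax : max ((p : ℝ) ^ (t : ℝ) * ZZ p y qt) (XX p qt) ≤ (p:ℝ) ^ K * r := by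
    refine (max_le ?_ ?_).trans hR
    · have : (p:ℝ) ^ (t:ℝ) * LL p y qt ≤ 1 := by
        calc (p:ℝ) ^ (t:ℝ) * LL p y qt ≤ (p:ℝ) ^ (t:ℝ) * (p:ℝ) ^ (-t : ℤ) := by gcongr
          _ = 1 := by
            rw [Real.rpow_natCast, zpow_neg, zpow_natCast]; exact mul_inv_cancel₀ (by positivity)
      unfold ZZ
      rw [← mul_assoc]
      exact mul_le_of_le_one_left hRn this
    · exact mul_le_of_le_one_left hRn hP
  calc content p y t qt ≤ (p : ℝ) ^ (-(t : ℝ) / ((n : ℝ) + 1)) * ((p:ℝ) ^ K * r) := by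
        unfold content; gcongr
    _ = (p:ℝ) ^ K * ((p : ℝ) ^ (-(t : ℝ) / ((n : ℝ) + 1)) * (p : ℝ) ^ ((t : ℝ) / ((n : ℝ) + 1))) := by
        simp only [r]; ring
    _ = _ := by rw [← Real.rpow_add hp0, neg_div, neg_add_cancel, Real.rpow_zero, mul_one]

lemma stepB1 (y : Fin n → ℚ_[p]) {c : ℝ} (hc : c < gammaExp p y) (N : ℕ) :
    ∃ t : ℕ, N ≤ t ∧ ∃ qt : Fin (n + 1) → ℚ, (∀ i, IsZInvP p (qt i)) ∧ qt ≠ 0 ∧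
      content p y t qt < (p:ℝ) ^ (-(c * (t:ℝ))) := by
  have hp := p_one_lt p
  have hp0 : (0:ℝ) < p := by linarith
  rcases lt_or_ge c 0 with hneg | hpos
  · obtain ⟨K, hK⟩ := dirichlet p y
    obtain ⟨m, hm⟩ := exists_nat_gt ((K:ℝ) / (-c))
    obtain ⟨qt, h1, h2, h3⟩ := hK (max N m)
    refine ⟨max N m, le_max_left _ _, qt, h1, h2, h3.trans_lt ?_⟩
    rw [← Real.rpow_natCast, Real.rpow_lt_rpow_left_iff hp]
    rw [div_lt_iff₀ (by linarith)] at hm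
    have : (m:ℝ) ≤ (max N m : ℕ) := by exact_mod_cast le_max_right _ _
    nlinarith
  · have hne : {c : ℝ | 0 ≤ c ∧ ∀ N : ℕ, ∃ t : ℕ, N ≤ t ∧
        deltaOne p y t ≤ (p : ℝ) ^ (-(c * (t : ℝ)))}.Nonempty := by
      by_contra h
      rw [Set.not_nonempty_iff_eq_empty] at h
      unfold gammaExp at hc
      rw [h, Real.sSup_empty] at hc
      linarith
    obtain ⟨c', ⟨-, h⟩, hcc⟩ := exists_lt_of_lt_csSup hne hc
    obtain ⟨t, ht, hd⟩ := h (max N 1)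
    refine ⟨t, (le_max_left _ _).trans ht, exists_of_delta_lt p y t (hd.trans_lt ?_)⟩
    rw [Real.rpow_lt_rpow_left_iff hp]
    have : (1:ℝ) ≤ t := by exact_mod_cast (le_max_right _ _).trans ht
    nlinarith

lemma stepB2 (y : Fin n → ℚ_[p]) {qt : Fin (n + 1) → ℚ} (hq : ∀ i, IsZInvP p (qt i)) (h0 : qt ≠ 0)
    (hL : LL p y qt = 0) (v : ℝ) : WpCond p y v := by
  have hp := p_one_lt p
  rw [wpCond_iff]
  intro T
  have hX : 1 ≤ XX p qt := by
    by_cases h : ∀ i : Fin n, qt i.succ = 0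
    · have := one_le_Z p y hq h0 h
      unfold ZZ at this
      rw [hL] at this; norm_num at this
    · push Not at h
      obtain ⟨i, hi⟩ := h
      exact one_le_X p hq hi
  obtain ⟨k, hk⟩ := exists_nat_gt (max T 1)
  have hkT := (le_max_left _ _).trans_lt hk
  have hk1 := (le_max_right _ _).trans_lt hk
  set m : ℤ := p * k + 1 with hm
  have hmn : ‖((m : ℚ) : ℚ_[p])‖ = 1 := by
    rw [Rat.cast_intCast]
    refine le_antisymm (Padic.norm_int_le_one _) (not_lt.1 fun h => ?_)
    rw [Padic.norm_intCast_lt_one_iff] at h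
    have h1 : (p:ℤ) ∣ 1 := (Int.dvd_add_right (Dvd.intro _ rfl)).1 h
    have h2 : p ∣ 1 := by exact_mod_cast h1
    exact (Fact.out : p.Prime).one_lt.ne' (Nat.dvd_one.1 h2)
  have hmk : (k:ℝ) ≤ |((m:ℚ):ℝ)| := by
    refine le_trans ?_ (le_abs_self _)
    rw [hm]; push_cast
    nlinarith
  have hX' := X_smul p (m:ℚ) qt
  rw [hmn, mul_one] at hX'
  refine ⟨fun i => (m:ℚ) * qt i, fun i => zinv_int_mul p (hq i) m, ?_, ?_⟩
  · rw [hX']; nlinarith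
  · rw [L_smul, hL, mul_zero]
    have hR := R_pos h0
    have : 0 < supNormR fun i => (m:ℚ) * qt i := by rw [R_smul]; exact mul_pos (by linarith) hR
    have : 0 < XX p fun i => (m:ℚ) * qt i := by rw [hX']; nlinarith
    positivity

/-- finitely many values of `Z` when `X` is bounded. -/
lemma stepB3 (y : Fin n → ℚ_[p]) (T : ℝ) : ∃ S : Set ℝ, S.Finite ∧
    ∀ qt : Fin (n + 1) → ℚ, (∀ i, IsZInvP p (qt i)) → 1 ≤ XX p qt → XX p qt ≤ T →
      ZZ p y qt ≤ 1 → ZZ p y qt ∈ S := by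
  have hp := p_one_lt p
  have hp0 : (0:ℝ) < p := by linarith
  obtain ⟨K, hK⟩ := exists_K p y
  have hpK : (1:ℝ) ≤ (p:ℝ) ^ K := one_le_pow₀ hp.le
  obtain ⟨B, hB⟩ := exists_nat_gt ((p:ℝ) ^ K * T)
  refine ⟨(fun a : Fin (n + 1) → ℤ => ZZ p y fun i => (a i : ℚ)) ''
    Set.Icc (fun _ => -(B:ℤ)) (fun _ => (B:ℤ)), (Set.finite_Icc _ _).image _, ?_⟩
  intro qt hq h1 hT hZ
  -- P is a power of p
  have hPpos : 0 < PP p qt := by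
    rcases (P_nonneg p qt).lt_or_eq with h | h
    · exact h
    · unfold XX at h1; rw [← h] at h1; norm_num at h1
  have hne : Nonempty (Fin n) := by
    by_contra h
    rw [not_nonempty_iff] at h
    unfold PP at hPpos
    rw [Real.iSup_of_isEmpty] at hPpos
    exact lt_irrefl _ hPpos
  obtain ⟨i0, hi0⟩ := exists_eq_ciSup_of_finite (f := fun i : Fin n => ‖(qt i.succ : ℚ_[p])‖)
  change ‖(qt i0.succ : ℚ_[p])‖ = PP p qt at hi0
  have hq0 : (qt i0.succ : ℚ_[p]) ≠ 0 := by
    rw [← norm_pos_iff, hi0]; exact hPpos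
  rw [Padic.norm_eq_zpow_neg_valuation hq0] at hi0
  set k : ℤ := -(qt i0.succ : ℚ_[p]).valuation with hk
  set q1 : Fin (n + 1) → ℚ := fun i => (p:ℚ) ^ k * qt i with hq1
  have hZ1 : ∀ i, IsZInvP p (q1 i) := fun i => zinv_mul_zpow p (hq i) k
  have hP1 : PP p q1 = 1 := by
    rw [hq1, P_smul, ← hi0]; push_cast
    rw [Padic.norm_p_zpow, ← zpow_add₀ hp0.ne', neg_add_cancel, zpow_zero]
  have hX1 : XX p q1 = XX p qt := by rw [hq1, X_smul, zpow_unit, one_mul]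
  have hZZ1 : ZZ p y q1 = ZZ p y qt := by rw [hq1, Z_smul, zpow_unit, one_mul]
  have hR1 : supNormR q1 = XX p qt := by rw [← hX1, XX, hP1, one_mul]
  have hL1 : LL p y q1 ≤ 1 := by
    have : ZZ p y q1 ≤ 1 := hZZ1 ▸ hZ
    unfold ZZ at this
    have := L_nonneg p y q1
    nlinarith
  have hint : ∀ i, ‖(q1 i : ℚ_[p])‖ ≤ (p:ℝ) ^ K := by
    intro i
    refine Fin.cases ?_ (fun i => ?_) i
    · have e : (q1 0 : ℚ_[p]) = ((q1 0 : ℚ_[p]) + ∑ i : Fin n, (q1 i.succ : ℚ_[p]) * y i)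
          - ∑ i : Fin n, (q1 i.succ : ℚ_[p]) * y i := by ring
      rw [e]
      rw [sub_eq_add_neg]
      refine (IsUltrametricDist.norm_add_le_max _ _).trans (max_le (hL1.trans hpK) ?_)
      rw [norm_neg]
      refine IsUltrametricDist.norm_sum_le_of_forall_le_of_nonneg (by positivity) fun i _ => ?_
      rw [norm_mul]
      have := le_P p q1 i
      rw [hP1] at this
      have := hK i
      nlinarith [norm_nonneg (y i)]
    · exact (le_P p q1 i).trans (hP1.le.trans hpK)
  set q2 : Fin (n + 1) → ℚ := fun i => (p:ℚ) ^ (K:ℤ) * q1 i with hq2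
  have hZ2 : ∀ i, IsZInvP p (q2 i) := fun i => zinv_mul_zpow p (hZ1 i) K
  have hn2 : ∀ i, ‖(q2 i : ℚ_[p])‖ ≤ 1 := by
    intro i
    simp only [hq2]
    push_cast
    rw [norm_mul, zpow_natCast, Padic.norm_p_pow, zpow_neg, zpow_natCast,
      inv_mul_le_iff₀ (by positivity), mul_one]
    exact hint i
  choose a ha using fun i => zinv_int p (hZ2 i) (hn2 i)
  have hZZ2 : ZZ p y q2 = ZZ p y qt := by rw [hq2, Z_smul, zpow_unit, one_mul, hZZ1]
  have hR2 : supNormR q2 ≤ (p:ℝ) ^ K * T := by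
    rw [hq2, R_smul, hR1]
    push_cast
    rw [zpow_natCast, abs_of_nonneg (by positivity)]
    gcongr
  have hab : ∀ i, |a i| ≤ B := by
    intro i
    have := (le_R q2 i).trans (hR2.trans hB.le)
    rw [ha i] at this
    push_cast at this
    exact_mod_cast this
  refine ⟨a, ⟨fun i => (abs_le.1 (hab i)).1, fun i => (abs_le.1 (hab i)).2⟩, ?_⟩
  simp only
  rw [← hZZ2]
  congr 1
  funext i
  exact (ha i).symm

lemma dirB (y : Fin n → ℚ_[p]) {v : ℝ} (hv : 0 < v)
    (h : (v - n) / ((n + 1) * (v + 1)) < gammaExp p y) : WpCond p y v := by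
  have hp := p_one_lt p
  have hp0 : (0:ℝ) < p := by linarith
  by_contra hW
  have hL : ∀ qt : Fin (n + 1) → ℚ, (∀ i, IsZInvP p (qt i)) → qt ≠ 0 → 0 < ZZ p y qt := by
    intro qt hq h0
    refine mul_pos ((L_nonneg p y qt).lt_of_ne fun h => ?_) (R_pos h0)
    exact hW (stepB2 p y hq h0 h.symm v)
  have hW' := hW
  rw [wpCond_iff] at hW'
  push Not at hW'
  obtain ⟨T, hT⟩ := hW'
  obtain ⟨S, hS, hSm⟩ := stepB3 p y T
  obtain ⟨ε, hε, hεS⟩ : ∃ ε > 0, ∀ s ∈ S, 0 < s → ε ≤ s := by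
    rcases (S ∩ Set.Ioi 0).eq_empty_or_nonempty with he | hne
    · refine ⟨1, one_pos, fun s hs h0 => ?_⟩
      have : s ∈ S ∩ Set.Ioi 0 := ⟨hs, h0⟩
      rw [he] at this; exact this.elim
    · obtain ⟨e, he, hm⟩ := Set.exists_min_image _ id (hS.inter_of_left (Set.Ioi 0)) hne
      exact ⟨e, he.2, fun s hs h0 => hm s ⟨hs, h0⟩⟩
  set d := (v - n) / ((n + 1) * (v + 1)) with hd
  have hn1 : (0:ℝ) < n + 1 := by positivity
  have hv1 : (0:ℝ) < v + 1 := by positivity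
  have e1 : d = 1 / (n+1) - 1 / (v+1) := by rw [hd]; field_simp; ring
  obtain ⟨N, hN⟩ := exists_nat_gt (-(Real.logb p ε) * ((v + 1) / v))
  obtain ⟨t, ht, qt, hq, h0, hc⟩ := stepB1 p y h (max N 1)
  have ht1 : (1:ℝ) ≤ t := by exact_mod_cast (le_max_right _ _).trans ht
  have htN : (N:ℝ) ≤ t := by exact_mod_cast (le_max_left _ _).trans ht
  set s : ℝ := t / (v + 1) with hs
  have hs0 : 0 < s := by positivity
  have hts : (t:ℝ) = s * (v + 1) := by rw [hs]; field_simp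
  have hmax : max ((p : ℝ) ^ (t : ℝ) * ZZ p y qt) (XX p qt) < (p:ℝ) ^ s := by
    have e : -(d * (t:ℝ)) = -(t : ℝ) / ((n : ℝ) + 1) + s := by rw [e1, hs]; ring
    unfold content at hc
    rw [e, Real.rpow_add hp0] at hc
    exact lt_of_mul_lt_mul_left hc (by positivity)
  have hX := (le_max_right _ _).trans_lt hmax
  have hZ : ZZ p y qt < (p:ℝ) ^ (-(s * v)) := by
    have h1 := (le_max_left _ _).trans_lt hmax
    have h2 : (p:ℝ) ^ s = (p:ℝ) ^ (t:ℝ) * (p:ℝ) ^ (-(s * v)) := by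
      rw [← Real.rpow_add hp0, hts]; congr 1; ring
    rw [h2] at h1
    exact lt_of_mul_lt_mul_left h1 (by positivity)
  have hZ1 : ZZ p y qt < 1 := hZ.trans_le
    (Real.rpow_le_one_of_one_le_of_nonpos hp.le (by nlinarith))
  have hX1 : 1 ≤ XX p qt := by
    by_cases h : ∀ i : Fin n, qt i.succ = 0
    · have := one_le_Z p y hq h0 h
      linarith
    · push Not at h
      obtain ⟨i, hi⟩ := h
      exact one_le_X p hq hi
  have hXT : XX p qt ≤ T := by
    by_contra hcon
    have h1 := hT qt hq (not_le.1 hcon)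
    rw [← div_eq_mul_inv, div_le_iff₀ (R_pos h0)] at h1
    change _ ≤ ZZ p y qt at h1
    have h2 : (p:ℝ) ^ (-(s * v)) ≤ XX p qt ^ (-v) := by
      rw [show -(s * v) = s * (-v) by ring, Real.rpow_mul hp0.le]
      exact Real.rpow_le_rpow_of_nonpos (by linarith) hX.le (by linarith)
    linarith
  have h3 := hεS _ (hSm qt hq hX1 hXT hZ1.le) (hL qt hq h0)
  have h4 : (p:ℝ) ^ (-(s * v)) ≤ ε := by
    rw [← Real.rpow_logb hp0 hp.ne' hε]
    refine Real.rpow_le_rpow_of_exponent_le hp.le ?_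
    have h5 := hN.le.trans htN
    rw [hts, mul_div_assoc', div_le_iff₀ hv] at h5
    have : -Real.logb p ε ≤ s * v := by
      refine le_of_mul_le_mul_right ?_ hv1
      linarith
    linarith
  linarith

end helpers

/-- For every `y ∈ ℚ_p^n`,
`w_p(y) = (n(1 + γ(y)) + γ(y)) / (1 − (n+1)γ(y))`, with value `+∞` when
`γ(y) ≥ 1/(n+1)`. -/
theorem statement5 (p : ℕ) [Fact p.Prime] (n : ℕ) (hn : 1 ≤ n) (y : Fin n → ℚ_[p]) :
    wpExp p y =
      if gammaExp p y < 1 / ((n : ℝ) + 1) then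
        ENNReal.ofReal (((n : ℝ) * (1 + gammaExp p y) + gammaExp p y) /
          (1 - ((n : ℝ) + 1) * gammaExp p y))
      else ⊤ := by
  have hn1 : (0:ℝ) < n + 1 := by positivity
  have hg := gamma_nonneg p y
  set g := gammaExp p y with hgdef
  split_ifs with h
  · rw [lt_div_iff₀ hn1] at h
    have hD : 0 < 1 - ((n:ℝ) + 1) * g := by linarith
    refine le_antisymm ?_ ?_
    · refine iSup₂_le fun v hv => ENNReal.ofReal_le_ofReal ?_
      have h1 := dirA p y hv.1 hv.2
      have hv1 : 0 < v + 1 := by linarith [hv.1]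
      rw [div_le_iff₀ (by positivity)] at h1
      rw [le_div_iff₀ hD]
      linarith
    · refine le_of_forall_lt fun c hc => ?_
      obtain ⟨c', h1, h2⟩ := exists_between hc
      have hc't : c' ≠ ⊤ := (h2.trans ENNReal.ofReal_lt_top).ne
      have hv : 0 < c'.toReal := ENNReal.toReal_pos (bot_le.trans_lt h1).ne' hc't
      rw [← ENNReal.ofReal_toReal hc't] at h1 h2
      refine h1.trans_le (le_iSup₂_of_le c'.toReal ⟨hv, dirB p y hv ?_⟩ le_rfl)
      have h3 := (ENNReal.ofReal_lt_ofReal_iff_of_nonneg hv.le).1 h2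
      rw [lt_div_iff₀ hD] at h3
      rw [div_lt_iff₀ (by positivity)]
      linarith
  · refine ENNReal.eq_top_of_forall_nnreal_le fun r => ?_
    have hv : (0:ℝ) < r + 1 := by positivity
    refine le_trans ?_ (le_iSup₂_of_le ((r:ℝ) + 1) ⟨hv, dirB p y hv ?_⟩ le_rfl)
    · rw [← ENNReal.ofReal_coe_nnreal]
      exact ENNReal.ofReal_le_ofReal (by linarith)
    · refine lt_of_lt_of_le ?_ (not_lt.1 h)
      rw [div_lt_div_iff₀ (by positivity) hn1]
      nlinarith

end PadicDioph
end
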